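/- arXiv:2003.10263 — 14 statements merged into one kernel-verified Lean document; each statement's English description precedes it below -/
import Mathlib

section
/- Let [a,b] be a nondegenerate compact interval, let (uₙ)_{n≥1} ∈ ℱ and let (aₙ)_{n≥1} be a sequence of real numbers. Then the partial sums of the series ∑_{n=1}^∞ aₙ uₙ(x) converge uniformly on [a,b] if and only if aₙ → 0 as n → ∞. -/
open Filter Topology

/-- The family ℱ: sequences of continuous functions on [a,b] with pairwise disjoint
supports, uniformly bounded and uniformly far from zero in sup norm. -/
def MemF (a b : ℝ) (u : ℕ → C(Set.Icc a b, ℝ)) : Prop :=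
  (∀ n m, n ≠ m → Function.support ⇑(u n) ∩ Function.support ⇑(u m) = ∅) ∧
  0 < ⨅ n, ‖u n‖ ∧ BddAbove (Set.range fun n => ‖u n‖)

theorem stmt1 (a b : ℝ) (hab : a < b) (u : ℕ → C(Set.Icc a b, ℝ))
    (hu : MemF a b u) (c : ℕ → ℝ) :
    (∃ S : Set.Icc a b → ℝ,
      TendstoUniformly (fun N x => ∑ n ∈ Finset.range N, c n * u n x) S atTop) ↔
    Tendsto c atTop (nhds 0) := by
  obtain ⟨hd, hpos, M, hM⟩ := hu
  have hle : ∀ n, ‖u n‖ ≤ M := fun n => hM ⟨n, rfl⟩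
  have hge : ∀ n, (⨅ n, ‖u n‖) ≤ ‖u n‖ := fun n =>
    ciInf_le ⟨0, by rintro _ ⟨n, rfl⟩; exact norm_nonneg _⟩ n
  set δ := ⨅ n, ‖u n‖ with hδ
  have hMpos : 0 < M := lt_of_lt_of_le hpos ((hge 0).trans (hle 0))
  constructor
  · rintro ⟨S, hS⟩
    rw [Metric.tendstoUniformly_iff] at hS
    rw [Metric.tendsto_atTop]
    intro ε hε
    obtain ⟨N, hN⟩ := eventually_atTop.1 (hS (ε * δ / 4) (by positivity))
    refine ⟨N, fun n hn => ?_⟩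
    have key : ‖c n • u n‖ ≤ ε * δ / 2 := by
      rw [ContinuousMap.norm_le _ (by positivity)]
      intro x
      have h1 := hN n hn x
      have h2 := hN (n + 1) (by omega) x
      rw [Finset.sum_range_succ] at h2
      rw [Real.dist_eq, abs_lt] at h1 h2
      rw [ContinuousMap.smul_apply, smul_eq_mul, Real.norm_eq_abs, abs_le]
      constructor <;> linarith [h1.1, h1.2, h2.1, h2.2]
    rw [norm_smul] at key
    rw [dist_zero_right]
    have h3 : ‖c n‖ * δ ≤ ε * δ / 2 :=
      (mul_le_mul_of_nonneg_left (hge n) (norm_nonneg _)).trans key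
    by_contra hcon
    push Not at hcon
    nlinarith [mul_le_mul_of_nonneg_right hcon hpos.le, mul_pos hε hpos]
  · intro hc
    have hk : ∀ x, ∃ k, ∀ n, n ≠ k → u n x = 0 := by
      intro x
      by_cases h : ∃ k, u k x ≠ 0
      · obtain ⟨k, hk⟩ := h
        refine ⟨k, fun n hn => ?_⟩
        by_contra h0
        have : x ∈ Function.support ⇑(u n) ∩ Function.support ⇑(u k) := ⟨h0, hk⟩
        rw [hd n k hn] at this
        exact this
      · push Not at h
        exact ⟨0, fun n _ => h n⟩
    choose k hk using hk
    refine ⟨fun x => c (k x) * u (k x) x, ?_⟩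
    rw [Metric.tendstoUniformly_iff]
    intro ε hε
    rw [Metric.tendsto_atTop] at hc
    obtain ⟨N, hN⟩ := hc (ε / M) (by positivity)
    filter_upwards [eventually_ge_atTop N] with n hn x
    by_cases hkn : k x < n
    · rw [Finset.sum_eq_single (k x)]
      · simpa using hε
      · intro m _ hm
        rw [hk x m hm, mul_zero]
      · intro h
        exact absurd (Finset.mem_range.2 hkn) h
    · rw [Finset.sum_eq_zero]
      · have h1 := hN (k x) (by omega)
        rw [dist_zero_right] at h1 ⊢
        rw [norm_mul]
        have h2 : ‖u (k x) x‖ ≤ M := ((u (k x)).norm_coe_le_norm x).trans (hle _)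
        calc _ ≤ ‖c (k x)‖ * M := mul_le_mul_of_nonneg_left h2 (norm_nonneg _)
          _ < ε := (lt_div_iff₀ hMpos).1 h1
      · intro m hm
        rw [hk x m (by have := Finset.mem_range.1 hm; omega), mul_zero]
end

section
/- Let [a,b] be a nondegenerate compact interval. For every sequence of functions (uₙ)_{n≥1} ∈ ℱ and every sequence of real scalars (aₙ)_{n≥1} ∈ c₀ \ ℓ₁, the sequence of continuous functions (aₙ uₙ)_{n≥1} belongs to 𝒜ℳ𝒲, i.e. ∑ₙ aₙuₙ(x) converges absolutely at every x ∈ [a,b], its partial sums converge uniformly on [a,b], but ∑ₙ ‖aₙuₙ‖∞ = +∞. -/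
open Filter Topology

/-- Anti M-Weierstrass sequences: the series converges absolutely at each point,
its partial sums converge uniformly, but the series of the sup norms diverges. -/
def AntiMW (a b : ℝ) (f : ℕ → C(Set.Icc a b, ℝ)) : Prop :=
  (∀ x : Set.Icc a b, Summable fun n => |f n x|) ∧
  (∃ S : Set.Icc a b → ℝ,
    TendstoUniformly (fun N x => ∑ n ∈ Finset.range N, f n x) S atTop) ∧
  ¬ Summable fun n => ‖f n‖

theorem stmt3 (a b : ℝ) (hab : a < b) (u : ℕ → C(Set.Icc a b, ℝ))
    (hu : MemF a b u) (c : ℕ → ℝ)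
    (hc0 : Tendsto c atTop (nhds 0)) (hcl1 : ¬ Summable fun n => |c n|) :
    AntiMW a b (fun n => c n • u n) := by
  obtain ⟨hd, hinf, M, hM⟩ := hu
  have hM' : ∀ n, ‖u n‖ ≤ M := fun n => hM ⟨n, rfl⟩
  have key : ∀ x, ∃ k, ∀ n, n ≠ k → u n x = 0 := by
    intro x
    by_cases h : ∃ k, u k x ≠ 0
    · obtain ⟨k, hk⟩ := h
      refine ⟨k, fun n hn => ?_⟩
      by_contra h0
      have hm : x ∈ Function.support ⇑(u n) ∩ Function.support ⇑(u k) := ⟨h0, hk⟩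
      rw [hd n k hn] at hm
      exact hm
    · push Not at h
      exact ⟨0, fun n _ => h n⟩
  choose k hk using key
  refine ⟨fun x => ?_, ⟨fun x => c (k x) * u (k x) x, ?_⟩, fun hs => hcl1 ?_⟩
  · apply summable_of_ne_finset_zero (s := {k x})
    intro n hn
    have hn' : n ≠ k x := by simpa using hn
    simp [hk x n hn']
  · rw [Metric.tendstoUniformly_iff]
    intro ε hε
    have hM0 : 0 ≤ M := (norm_nonneg _).trans (hM' 0)
    have hpos : 0 < ε / (M + 1) := by positivity
    obtain ⟨N₀, hN₀⟩ := Metric.tendsto_atTop.1 hc0 _ hpos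
    filter_upwards [eventually_ge_atTop N₀] with N hN x
    by_cases hkN : k x < N
    · have : ∑ n ∈ Finset.range N, (c n • u n) x = c (k x) * u (k x) x := by
        rw [Finset.sum_eq_single (k x)]
        · simp
        · intro n _ hn
          simp [hk x n hn]
        · intro h
          exact absurd (Finset.mem_range.2 hkN) h
      rw [this, dist_self]
      exact hε
    · have : ∑ n ∈ Finset.range N, (c n • u n) x = 0 := by
        apply Finset.sum_eq_zero
        intro n hn
        have hn' : n ≠ k x := by
          have := Finset.mem_range.1 hn
          omega
        simp [hk x n hn']
      rw [this, dist_zero_right, norm_mul]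
      have h1 : ‖c (k x)‖ < ε / (M + 1) := by
        simpa [dist_zero_right] using hN₀ (k x) (by omega)
      have h2 : ‖u (k x) x‖ ≤ M := ((u (k x)).norm_coe_le_norm x).trans (hM' _)
      calc ‖c (k x)‖ * ‖u (k x) x‖ ≤ ‖c (k x)‖ * (M + 1) := by
            gcongr
            linarith
        _ < ε / (M + 1) * (M + 1) := by gcongr
        _ = ε := by field_simp
  · have hb : BddBelow (Set.range fun n => ‖u n‖) :=
      ⟨0, by rintro _ ⟨n, rfl⟩; exact norm_nonneg _⟩
    refine Summable.of_nonneg_of_le (fun n => abs_nonneg _) (fun n => ?_)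
      (hs.mul_left (⨅ n, ‖u n‖)⁻¹)
    have h1 : (⨅ n, ‖u n‖) ≤ ‖u n‖ := ciInf_le hb n
    rw [norm_smul, Real.norm_eq_abs, inv_mul_eq_div, le_div_iff₀ hinf]
    gcongr
end

section
/- Let [a,b] be a nondegenerate compact interval. There exists a linear map J : C([a,b]) → C([a,b])^ℕ such that: (i) J is an isometry into the uniformly bounded sequences, i.e. supₙ ‖(Jf)ₙ‖∞ = ‖f‖∞ for every f ∈ C([a,b]), and indeed ‖(Jf)ₙ‖∞ = ‖f‖∞ for every n; and (ii) for every f ≠ 0, the sequence Jf belongs to ℱ, i.e. the supports of the functions (Jf)ₙ are pairwise disjoint and 0 < infₙ ‖(Jf)ₙ‖∞ ≤ supₙ ‖(Jf)ₙ‖∞ < +∞. In particular J is injective and C([a,b]) is isometrically isomorphic to a linear subspace of ℓ∞(C([a,b])) contained in ℱ ∪ {0}. -/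
open Filter Topology

/-- rescaled coordinate -/
noncomputable def tq (a b : ℝ) (n : ℕ) (x : ℝ) : ℝ := (x - a) / (b - a) * 2 ^ (n + 1)

/-- trapezoid supported in (1,2) -/
noncomputable def trap (t : ℝ) : ℝ := max 0 (min 1 (min (3 * (t - 1)) (3 * (2 - t))))

theorem tq_cont (a b : ℝ) (n : ℕ) : Continuous (tq a b n) := by
  unfold tq; fun_prop

theorem trap_cont : Continuous trap := by
  unfold trap; fun_prop

theorem trap_supp {t : ℝ} (h : trap t ≠ 0) : 1 < t ∧ t < 2 := by
  by_contra hc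
  apply h
  unfold trap
  apply max_eq_left
  by_cases h1 : 1 < t
  · have : 2 ≤ t := by by_contra h2; exact hc ⟨h1, not_le.mp h2⟩
    exact (min_le_right _ _).trans ((min_le_right _ _).trans (by linarith))
  · exact (min_le_right _ _).trans ((min_le_left _ _).trans (by linarith))

theorem trap_abs (t : ℝ) : |trap t| ≤ 1 := by
  unfold trap
  rw [abs_of_nonneg (le_max_left _ _)]
  exact max_le zero_le_one (min_le_left _ _)

theorem trap_one {s : ℝ} (h0 : 0 ≤ s) (h1 : s ≤ 1) : trap (1 + (1 + s) / 3) = 1 := by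
  unfold trap
  rw [min_eq_left (le_min (by linarith) (by linarith))]
  exact max_eq_right zero_le_one

theorem tq_disj (a b : ℝ) (x : ℝ) (n m : ℕ) (h : n < m) (h1 : 1 < tq a b n x)
    (h2 : tq a b m x < 2) : False := by
  obtain ⟨k, rfl⟩ := Nat.exists_eq_add_of_lt h
  have e : tq a b (n + k + 1) x = tq a b n x * (2 * 2 ^ k) := by
    unfold tq; ring
  have : (1 : ℝ) ≤ 2 ^ k := one_le_pow₀ (by norm_num)
  rw [e] at h2
  nlinarith

/-- the n-th component -/
noncomputable def Jfun (a b : ℝ) (hab : a < b) (f : C(Set.Icc a b, ℝ)) (n : ℕ) :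
    C(Set.Icc a b, ℝ) where
  toFun x := trap (tq a b n x) *
    f (Set.projIcc a b hab.le (a + (b - a) * (3 * (tq a b n x - 1) - 1)))
  continuous_toFun := by
    have h1 : Continuous fun x : Set.Icc a b => tq a b n x :=
      (tq_cont a b n).comp continuous_subtype_val
    have h2 := trap_cont.comp h1
    refine h2.mul (f.continuous.comp (continuous_projIcc.comp ?_))
    fun_prop

theorem Jfun_norm (a b : ℝ) (hab : a < b) (f : C(Set.Icc a b, ℝ)) (n : ℕ) :
    ‖Jfun a b hab f n‖ = ‖f‖ := by
  apply le_antisymm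
  · rw [ContinuousMap.norm_le _ (norm_nonneg _)]
    intro x
    change ‖trap (tq a b n x) * f _‖ ≤ _
    rw [norm_mul]
    calc _ ≤ 1 * ‖f‖ := mul_le_mul (trap_abs _) (f.norm_coe_le_norm _) (norm_nonneg _) zero_le_one
      _ = _ := one_mul _
  · rw [ContinuousMap.norm_le _ (norm_nonneg _)]
    intro z
    obtain ⟨z, hz⟩ := z
    have hd : 0 < b - a := sub_pos.mpr hab
    obtain ⟨s, hs⟩ : ∃ s, s = (z - a) / (b - a) := ⟨_, rfl⟩
    have h0 : 0 ≤ s := hs ▸ div_nonneg (by linarith [hz.1]) hd.le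
    have h1 : s ≤ 1 := by rw [hs, div_le_one hd]; linarith [hz.2]
    have hp : (2 : ℝ) ≤ 2 ^ (n + 1) := by
      have : (1 : ℝ) ≤ 2 ^ n := one_le_pow₀ (by norm_num)
      rw [pow_succ]; linarith
    obtain ⟨r, hr⟩ : ∃ r : ℝ, r = (1 + (1 + s) / 3) / 2 ^ (n + 1) := ⟨_, rfl⟩
    have hr0 : 0 ≤ r := by rw [hr]; positivity
    have hr1 : r ≤ 1 := by rw [hr, div_le_one (by positivity)]; linarith
    have hx : a + (b - a) * r ∈ Set.Icc a b := ⟨by nlinarith, by nlinarith⟩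
    have ht : tq a b n (a + (b - a) * r) = 1 + (1 + s) / 3 := by
      unfold tq; rw [hr]; field_simp; ring
    have key : Jfun a b hab f n ⟨_, hx⟩ = f ⟨z, hz⟩ := by
      change trap (tq a b n (a + (b - a) * r)) * f (Set.projIcc a b hab.le
        (a + (b - a) * (3 * (tq a b n (a + (b - a) * r) - 1) - 1))) = _
      rw [ht, trap_one h0 h1, one_mul]
      have : a + (b - a) * (3 * (1 + (1 + s) / 3 - 1) - 1) = z := by
        rw [hs]; field_simp; ring
      rw [this, Set.projIcc_of_mem hab.le hz]
    rw [← key]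
    exact ContinuousMap.norm_coe_le_norm _ _

theorem stmt4 (a b : ℝ) (hab : a < b) :
    ∃ J : C(Set.Icc a b, ℝ) →ₗ[ℝ] (ℕ → C(Set.Icc a b, ℝ)),
      (∀ f : C(Set.Icc a b, ℝ), ∀ n : ℕ, ‖J f n‖ = ‖f‖) ∧
      (∀ f : C(Set.Icc a b, ℝ), f ≠ 0 → MemF a b (J f)) ∧
      Function.Injective J := by
  have hn := Jfun_norm a b hab
  refine ⟨{ toFun := Jfun a b hab, map_add' := ?_, map_smul' := ?_ }, hn, ?_, ?_⟩
  · intro f g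
    ext n x
    simp [Jfun, mul_add]
  · intro c f
    ext n x
    simp [Jfun, mul_left_comm]
  · intro f hf
    refine ⟨?_, ?_, ?_⟩
    · intro n m hnm
      rw [Set.eq_empty_iff_forall_notMem]
      rintro x ⟨h1, h2⟩
      have h1' := trap_supp (left_ne_zero_of_mul (show trap (tq a b n x) * f _ ≠ 0 from h1))
      have h2' := trap_supp (left_ne_zero_of_mul (show trap (tq a b m x) * f _ ≠ 0 from h2))
      rcases lt_or_gt_of_ne hnm with h | h
      · exact tq_disj a b x n m h h1'.1 h2'.2
      · exact tq_disj a b x m n h h2'.1 h1'.2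
    · change 0 < ⨅ n, ‖Jfun a b hab f n‖
      simp only [hn, ciInf_const]
      exact norm_pos_iff.mpr hf
    · refine ⟨‖f‖, ?_⟩
      rintro _ ⟨n, rfl⟩
      exact (hn f n).le
  · rw [injective_iff_map_eq_zero]
    intro f h
    have h0 : Jfun a b hab f 0 = 0 := congrFun h 0
    rw [← norm_eq_zero, ← hn f 0, h0, norm_zero]
end

section
/- Let [a,b] be a nondegenerate compact interval, let M be a linear subspace of the space of real sequences such that M \ {0} ⊂ c₀ \ ℓ₁, and let (uₙ)_{n≥1} ∈ ℱ. Then the set 𝓜 := { (aₙ uₙ)ₙ : (aₙ)ₙ ∈ M } is a linear subspace of C([a,b])^ℕ, the map (aₙ)ₙ ↦ (aₙuₙ)ₙ is an injective linear map from M onto 𝓜 (so 𝓜 has the same dimension as M), and 𝓜 \ {0} ⊂ 𝒜ℳ𝒲. -/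
open Filter Topology

theorem aux_amw (a b : ℝ) (c : ℕ → ℝ) (hc : Tendsto c atTop (nhds 0))
    (hc1 : ¬ Summable fun n => |c n|)
    (u : ℕ → C(Set.Icc a b, ℝ)) (hu : MemF a b u) :
    AntiMW a b (fun n => c n • u n) := by
  obtain ⟨hd, hpos, ⟨B, hB⟩⟩ := hu
  have hB' : ∀ n, ‖u n‖ ≤ B := fun n => hB ⟨n, rfl⟩
  have hB0 : 0 ≤ B := (norm_nonneg _).trans (hB' 0)
  have hx : ∀ x, ∃ m, ∀ n, n ≠ m → u n x = 0 := by
    intro x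
    by_cases h : ∃ m, u m x ≠ 0
    · obtain ⟨m, hm⟩ := h
      refine ⟨m, fun n hn => ?_⟩
      by_contra h0
      have : x ∈ Function.support ⇑(u n) ∩ Function.support ⇑(u m) := ⟨h0, hm⟩
      rw [hd n m hn] at this
      exact this
    · push Not at h
      exact ⟨0, fun n _ => h n⟩
  choose m hm using hx
  refine ⟨fun x => ?_, ⟨fun x => c (m x) * u (m x) x, ?_⟩, ?_⟩
  · apply summable_of_ne_finset_zero (s := {m x})
    intro n hn
    have : n ≠ m x := by simpa using hn
    simp [hm x n this]
  · rw [Metric.tendstoUniformly_iff]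
    intro ε hε
    have hδ : 0 < ε / (B + 1) := by positivity
    obtain ⟨N0, hN0⟩ := Metric.tendsto_atTop.1 hc _ hδ
    filter_upwards [eventually_ge_atTop N0] with N hN x
    by_cases hmN : m x < N
    · rw [Finset.sum_eq_single_of_mem (m x) (Finset.mem_range.2 hmN)]
      · simpa using hε
      · intro n _ hn
        simp [hm x n hn]
    · rw [Finset.sum_eq_zero]
      · have h1 := hN0 (m x) (by omega)
        rw [Real.dist_eq, sub_zero] at h1
        have h2 : |u (m x) x| ≤ B := ((u (m x)).norm_coe_le_norm x).trans (hB' _)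
        rw [Real.dist_eq, sub_zero, abs_mul]
        calc |c (m x)| * |u (m x) x| ≤ |c (m x)| * (B + 1) := by gcongr; linarith
          _ < ε / (B + 1) * (B + 1) := by gcongr
          _ = ε := by field_simp
      · intro n hn
        have : n ≠ m x := by
          have := Finset.mem_range.1 hn
          omega
        simp [hm x n this]
  · intro hs
    apply hc1
    refine Summable.of_nonneg_of_le (fun n => abs_nonneg _) (fun n => ?_)
      (hs.mul_left (⨅ n, ‖u n‖)⁻¹)
    have hi : ⨅ n, ‖u n‖ ≤ ‖u n‖ := ciInf_le ⟨0, by rintro _ ⟨k, rfl⟩; exact norm_nonneg _⟩ n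
    rw [norm_smul, Real.norm_eq_abs, inv_mul_eq_div, le_div_iff₀ hpos]
    gcongr

theorem stmt5 (a b : ℝ) (hab : a < b) (M : Submodule ℝ (ℕ → ℝ))
    (hM : ∀ c ∈ M, c ≠ 0 →
      Tendsto c atTop (nhds 0) ∧ ¬ Summable fun n => |c n|)
    (u : ℕ → C(Set.Icc a b, ℝ)) (hu : MemF a b u) :
    ∃ 𝓜 : Submodule ℝ (ℕ → C(Set.Icc a b, ℝ)),
      (𝓜 : Set (ℕ → C(Set.Icc a b, ℝ))) =
        {F | ∃ c ∈ M, F = fun n => c n • u n} ∧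
      Set.InjOn (fun c : ℕ → ℝ => fun n => c n • u n) M ∧
      Module.rank ℝ 𝓜 = Module.rank ℝ M ∧
      ∀ F ∈ 𝓜, F ≠ 0 → AntiMW a b F := by
  have hne : ∀ n, u n ≠ 0 := by
    intro n h
    have hi : ⨅ n, ‖u n‖ ≤ ‖u n‖ := ciInf_le ⟨0, by rintro _ ⟨k, rfl⟩; exact norm_nonneg _⟩ n
    have := hu.2.1
    rw [h, norm_zero] at hi
    linarith
  let T : (ℕ → ℝ) →ₗ[ℝ] (ℕ → C(Set.Icc a b, ℝ)) :=
    { toFun := fun c n => c n • u n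
      map_add' := fun c d => by funext n; simp [add_smul]
      map_smul' := fun r c => by funext n; simp [mul_smul] }
  have hT : Function.Injective T := by
    intro c d h
    funext n
    exact smul_left_injective ℝ (hne n) (congrFun h n)
  refine ⟨M.map T, ?_, hT.injOn, (Submodule.equivMapOfInjective T hT M).rank_eq.symm, ?_⟩
  · ext F
    constructor
    · rintro ⟨c, hc, rfl⟩
      exact ⟨c, hc, rfl⟩
    · rintro ⟨c, hc, rfl⟩
      exact ⟨c, hc, rfl⟩
  · rintro F ⟨c, hc, rfl⟩ hF
    have hc0 : c ≠ 0 := by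
      rintro rfl
      exact hF (map_zero T)
    obtain ⟨h1, h2⟩ := hM c hc hc0
    exact aux_amw a b c h1 h2 u hu
end

section
/- Let [a,b] be a nondegenerate compact interval, let (aₙ)_{n≥1} ∈ c₀ \ ℓ₁ with aₙ ≠ 0 for all n, and let U be a linear subspace of C([a,b])^ℕ such that U \ {0} ⊂ ℱ. Then the set 𝓤 := { (aₙ uₙ)ₙ : (uₙ)ₙ ∈ U } is a linear subspace of C([a,b])^ℕ, the map (uₙ)ₙ ↦ (aₙuₙ)ₙ is an injective linear map from U onto 𝓤 (so 𝓤 has the same dimension as U), and 𝓤 \ {0} ⊂ 𝒜ℳ𝒲. -/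
open Filter Topology

theorem stmt6 (a b : ℝ) (hab : a < b) (c : ℕ → ℝ)
    (hc0 : Tendsto c atTop (nhds 0)) (hcl1 : ¬ Summable fun n => |c n|)
    (hcne : ∀ n, c n ≠ 0)
    (U : Submodule ℝ (ℕ → C(Set.Icc a b, ℝ)))
    (hU : ∀ u ∈ U, u ≠ 0 → MemF a b u) :
    ∃ 𝓤 : Submodule ℝ (ℕ → C(Set.Icc a b, ℝ)),
      (𝓤 : Set (ℕ → C(Set.Icc a b, ℝ))) =
        {F | ∃ u ∈ U, F = fun n => c n • u n} ∧
      Set.InjOn (fun u : ℕ → C(Set.Icc a b, ℝ) => fun n => c n • u n) U ∧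
      Module.rank ℝ 𝓤 = Module.rank ℝ U ∧
      ∀ F ∈ 𝓤, F ≠ 0 → AntiMW a b F := by
  let T : (ℕ → C(Set.Icc a b, ℝ)) →ₗ[ℝ] (ℕ → C(Set.Icc a b, ℝ)) :=
    { toFun := fun u n => c n • u n
      map_add' := fun u v => by funext n; simp
      map_smul' := fun r u => by
        funext n
        exact smul_comm (c n) r (u n) }
  have hT : Function.Injective T := by
    intro u v h
    funext n
    have h1 : c n • u n = c n • v n := congrFun h n
    exact smul_right_injective _ (hcne n) h1
  refine ⟨U.map T, ?_, ?_, ?_, ?_⟩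
  · ext F
    constructor
    · rintro ⟨u, hu, rfl⟩
      exact ⟨u, hu, rfl⟩
    · rintro ⟨u, hu, rfl⟩
      exact ⟨u, hu, rfl⟩
  · exact fun u _ v _ h => hT h
  · exact (LinearEquiv.rank_eq (Submodule.equivMapOfInjective T hT U)).symm
  · rintro F ⟨u, hu, rfl⟩ hF
    have hu0 : u ≠ 0 := by
      rintro rfl
      exact hF (map_zero T)
    obtain ⟨hd, hpos, M, hM⟩ := hU u hu hu0
    have hM' : ∀ n, ‖u n‖ ≤ M := fun n => hM ⟨n, rfl⟩
    have hx : ∀ x : Set.Icc a b, ∃ k, ∀ n, n ≠ k → u n x = 0 := by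
      intro x
      by_cases h : ∃ k, u k x ≠ 0
      · obtain ⟨k, hk⟩ := h
        refine ⟨k, fun n hn => ?_⟩
        by_contra h'
        have : x ∈ Function.support ⇑(u n) ∩ Function.support ⇑(u k) := ⟨h', hk⟩
        rw [hd n k hn] at this
        exact this
      · push Not at h
        exact ⟨0, fun n _ => h n⟩
    choose k hk using hx
    refine ⟨fun x => ?_, ⟨fun x => c (k x) * u (k x) x, ?_⟩, fun hs => ?_⟩
    · refine summable_of_ne_finset_zero (s := {k x}) fun n hn => ?_
      have : u n x = 0 := hk x n (by simpa using hn)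
      change |c n * u n x| = 0
      simp [this]
    · rw [Metric.tendstoUniformly_iff]
      intro ε hε
      have hM0 : 0 ≤ M := (norm_nonneg _).trans (hM' 0)
      have hδ : 0 < ε / (M + 1) := by positivity
      obtain ⟨N0, hN0⟩ := (Metric.tendsto_atTop.1 hc0) _ hδ
      filter_upwards [eventually_ge_atTop N0] with N hN x
      change dist (c (k x) * u (k x) x) (∑ n ∈ Finset.range N, c n * u n x) < ε
      by_cases hkN : k x < N
      · rw [Finset.sum_eq_single (k x)]
        · simpa using hε
        · intro n _ hn
          simp [hk x n hn]
        · intro h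
          exact absurd (Finset.mem_range.2 hkN) h
      · rw [Finset.sum_eq_zero]
        · have h1 := hN0 (k x) (by omega)
          rw [dist_zero_right] at h1
          rw [dist_zero_right, norm_mul]
          have h2 : ‖u (k x) x‖ ≤ M := ((u (k x)).norm_coe_le_norm x).trans (hM' _)
          calc ‖c (k x)‖ * ‖u (k x) x‖ ≤ ‖c (k x)‖ * (M + 1) := by gcongr; linarith
            _ < ε / (M + 1) * (M + 1) := by gcongr
            _ = ε := by field_simp
        · intro n hn
          have : n < N := Finset.mem_range.1 hn
          simp [hk x n (by omega)]
    · apply hcl1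
      set δ := ⨅ n, ‖u n‖ with hδ
      have hle : ∀ n, δ ≤ ‖u n‖ := fun n =>
        ciInf_le ⟨0, by rintro _ ⟨m, rfl⟩; exact norm_nonneg _⟩ n
      refine Summable.of_nonneg_of_le (fun n => abs_nonneg _) (fun n => ?_) (hs.mul_left δ⁻¹)
      change |c n| ≤ δ⁻¹ * ‖c n • u n‖
      rw [norm_smul, Real.norm_eq_abs, inv_mul_eq_div, le_div_iff₀ hpos]
      exact mul_le_mul_of_nonneg_left (hle n) (abs_nonneg _)
end

section
/- Let [a,b] be a nondegenerate compact interval. The set 𝒜ℳ𝒲 is maximal lineable in C([a,b])^ℕ: there exists a linear subspace M of C([a,b])^ℕ whose dimension (over ℝ) equals the cardinality of the continuum 𝔠 and such that M \ {0} ⊂ 𝒜ℳ𝒲. -/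
open Filter Topology

lemma exists_bumps (a b : ℝ) (hab : a < b) : ∃ g : ℕ → C(Set.Icc a b, ℝ),
    (∀ n, ‖g n‖ = 1) ∧ ∀ n m x, g n x ≠ 0 → g m x ≠ 0 → n = m := by
  have hba : 0 < b - a := sub_pos.2 hab
  let g : ℕ → C(Set.Icc a b, ℝ) := fun n =>
    ⟨fun x => max 0 (1 - 4 * |2 ^ n * (((x : ℝ) - a) / (b - a)) - 1|), by fun_prop⟩
  have hg : ∀ n x, g n x = max 0 (1 - 4 * |2 ^ n * (((x : ℝ) - a) / (b - a)) - 1|) :=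
    fun n x => rfl
  refine ⟨g, ?_, ?_⟩
  · intro n
    apply le_antisymm
    · refine (ContinuousMap.norm_le _ zero_le_one).2 fun x => ?_
      rw [hg, Real.norm_eq_abs, abs_of_nonneg (le_max_left _ _)]
      refine max_le zero_le_one ?_
      have := abs_nonneg (2 ^ n * (((x : ℝ) - a) / (b - a)) - 1)
      linarith
    · have h1 : (0:ℝ) < (1/2:ℝ)^n := by positivity
      have h2 : (1/2:ℝ)^n ≤ 1 := pow_le_one₀ (by norm_num) (by norm_num)
      let x : Set.Icc a b := ⟨a + (b - a) * (1/2)^n, by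
        constructor <;> nlinarith⟩
      have hx : g n x = 1 := by
        have : (2:ℝ) ^ n * (((x : ℝ) - a) / (b - a)) = 1 := by
          have : ((x : ℝ) - a) / (b - a) = (1/2)^n := by
            simp only [x]; field_simp; ring
          rw [this, ← mul_pow]; norm_num
        rw [hg, this]; simp
      have := (g n).norm_coe_le_norm x
      rw [hx] at this
      simpa using this
  · have key : ∀ n m x, g n x ≠ 0 → g m x ≠ 0 → ¬ n < m := by
      intro n m x hn hm hlt
      rw [hg] at hn hm
      generalize ((x : ℝ) - a) / (b - a) = u at hn hm
      have pos : ∀ t : ℝ, max 0 (1 - 4 * |t - 1|) ≠ 0 → 3/4 < t ∧ t < 5/4 := by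
        intro t ht
        have h : 0 < 1 - 4 * |t - 1| := by
          by_contra h
          exact ht (max_eq_left (not_lt.1 h))
        have h' : |t - 1| < 1/4 := by linarith
        rw [abs_lt] at h'
        constructor <;> linarith
      obtain ⟨h1, h2⟩ := pos _ hn
      obtain ⟨h3, h4⟩ := pos _ hm
      obtain ⟨k, rfl⟩ := Nat.exists_eq_add_of_lt hlt
      have hk : (1:ℝ) ≤ 2 ^ k := one_le_pow₀ (by norm_num)
      have : (2:ℝ) ^ (n + k + 1) * u = 2 * 2 ^ k * (2 ^ n * u) := by ring
      rw [this] at h4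
      nlinarith
    intro n m x hn hm
    exact le_antisymm (not_lt.1 (key m n x hm hn)) (not_lt.1 (key n m x hn hm))

lemma antiMW_of (a b : ℝ) (g : ℕ → C(Set.Icc a b, ℝ)) (hg1 : ∀ n, ‖g n‖ = 1)
    (hg2 : ∀ n m x, g n x ≠ 0 → g m x ≠ 0 → n = m) (c : ℕ → ℝ)
    (hc : Tendsto c atTop (𝓝 0)) (hs : ¬ Summable fun n => |c n|) :
    AntiMW a b (fun n => c n • g n) := by
  have hcase : ∀ x, ∃ n, ∀ m, m ≠ n → g m x = 0 := by
    intro x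
    by_cases h : ∃ n, g n x ≠ 0
    · obtain ⟨n, hn⟩ := h
      exact ⟨n, fun m hm => by_contra fun h => hm (hg2 _ _ x h hn)⟩
    · push Not at h
      exact ⟨0, fun m _ => h m⟩
  choose i hi using hcase
  refine ⟨?_, ⟨fun x => c (i x) * g (i x) x, ?_⟩, ?_⟩
  · intro x
    refine summable_of_ne_finset_zero (s := {i x}) fun n hn => ?_
    simp [hi x n (by simpa using hn)]
  · rw [Metric.tendstoUniformly_iff]
    intro ε hε
    obtain ⟨N0, hN0⟩ := (Metric.tendsto_atTop.1 hc) ε hε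
    filter_upwards [eventually_ge_atTop N0] with N hN x
    by_cases h : i x < N
    · rw [Finset.sum_eq_single_of_mem (i x) (Finset.mem_range.2 h)
        (fun m _ hm => by simp [hi x m hm])]
      simpa using hε
    · rw [Finset.sum_eq_zero]
      · have h1 := hN0 (i x) (by omega)
        have h2 := (g (i x)).norm_coe_le_norm x
        rw [hg1, Real.norm_eq_abs] at h2
        rw [Real.dist_eq, sub_zero] at h1 ⊢
        rw [abs_mul]
        nlinarith [abs_nonneg (c (i x))]
      · intro m hm
        have : m ≠ i x := by rintro rfl; exact h (Finset.mem_range.1 hm)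
        simp [hi x m this]
  · simpa [norm_smul, hg1] using hs

lemma coef_tendsto (v : ℕ → ℝ) (C : ℝ) (hv : ∀ k, |v k| ≤ C) :
    Tendsto (fun n : ℕ => v n.unpair.1 / ((n.unpair.1 + 1) * (n.unpair.2 + 1))) atTop (𝓝 0) := by
  have hC : 0 ≤ C := (abs_nonneg _).trans (hv 0)
  have hlim : Tendsto (fun n : ℕ => C * (√((n:ℝ)))⁻¹) atTop (𝓝 0) := by
    have : Tendsto (fun n : ℕ => (√((n:ℝ)))⁻¹) atTop (𝓝 0) :=
      tendsto_inv_atTop_zero.comp (Real.tendsto_sqrt_atTop.comp tendsto_natCast_atTop_atTop)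
    simpa using this.const_mul C
  refine squeeze_zero_norm' ?_ hlim
  filter_upwards [eventually_gt_atTop 0] with n hn
  have h := Nat.pair_lt_max_add_one_sq n.unpair.1 n.unpair.2
  rw [Nat.pair_unpair] at h
  generalize n.unpair.1 = k at *
  generalize n.unpair.2 = m at *
  have h1 : max k m + 1 ≤ (k + 1) * (m + 1) := by
    rcases le_total k m with h | h <;> simp [h]
  have h2 : n ≤ ((k + 1) * (m + 1)) ^ 2 := h.le.trans (Nat.pow_le_pow_left h1 2)
  have h3 : √(n:ℝ) ≤ ((k:ℝ) + 1) * (m + 1) := by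
    apply Real.sqrt_le_iff.2 ⟨by positivity, by exact_mod_cast h2⟩
  have h4 : 0 < √(n:ℝ) := Real.sqrt_pos.2 (by exact_mod_cast hn)
  rw [Real.norm_eq_abs, abs_div, abs_of_pos (show (0:ℝ) < (k + 1) * (m + 1) by positivity),
    ← div_eq_mul_inv]
  exact div_le_div₀ hC (hv k) h4 h3

lemma coef_not_summable (v : ℕ → ℝ) (hv : v ≠ 0) :
    ¬ Summable (fun n : ℕ => |v n.unpair.1 / ((n.unpair.1 + 1) * (n.unpair.2 + 1))|) := by
  intro hs
  obtain ⟨k, hk⟩ := Function.ne_iff.1 hv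
  simp only [Pi.zero_apply] at hk
  have hinj : Function.Injective (fun m => Nat.pair k m) := by
    intro m m' h
    exact (Nat.pair_eq_pair.1 h).2
  have h1 := (hs.comp_injective hinj).mul_left ((k + 1) / |v k|)
  apply Real.not_summable_one_div_natCast
  rw [← summable_nat_add_iff 1]
  refine h1.congr fun m => ?_
  have : |v k| ≠ 0 := abs_ne_zero.2 hk
  simp only [Function.comp, Nat.unpair_pair]
  rw [abs_div, abs_of_pos (show (0:ℝ) < (k + 1) * (m + 1) by positivity)]
  push_cast
  field_simp

lemma geom_indep : LinearIndependent ℝ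
    (fun (t : Set.Ioo (0:ℝ) 1) => (fun k : ℕ => (t:ℝ) ^ k)) := by
  have h := linearIndependent_monoidHom (Multiplicative ℕ) ℝ
  have h2 := h.comp (fun t : Set.Ioo (0:ℝ) 1 => powersHom ℝ (t:ℝ)) (by
    intro s t hst
    exact Subtype.ext ((powersHom ℝ).injective hst))
  exact h2

theorem stmt7 (a b : ℝ) (hab : a < b) :
    ∃ M : Submodule ℝ (ℕ → C(Set.Icc a b, ℝ)),
      Module.rank ℝ M = Cardinal.continuum ∧
      ∀ F ∈ M, F ≠ 0 → AntiMW a b F := by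
  obtain ⟨g, hg1, hg2⟩ := exists_bumps a b hab
  let T : (ℕ → ℝ) →ₗ[ℝ] (ℕ → C(Set.Icc a b, ℝ)) :=
    { toFun := fun v n => (v n.unpair.1 / ((n.unpair.1 + 1) * (n.unpair.2 + 1))) • g n
      map_add' := by
        intro v w; funext n
        simp only [Pi.add_apply, add_div, add_smul]
      map_smul' := by
        intro r v; funext n
        simp only [Pi.smul_apply, smul_eq_mul, mul_div_assoc, mul_smul, RingHom.id_apply] }
  let G := Finsupp.linearCombination ℝ (fun (t : Set.Ioo (0:ℝ) 1) => (fun k : ℕ => (t:ℝ) ^ k))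
  have hG : ∀ l, l ≠ 0 → G l ≠ 0 := fun l hl h =>
    hl ((linearIndependent_iff.1 geom_indep) l h)
  have hbd : ∀ l, ∃ C, ∀ k, |G l k| ≤ C := by
    intro l
    refine ⟨∑ t ∈ l.support, |l t|, fun k => ?_⟩
    simp only [G, Finsupp.linearCombination_apply, Finsupp.sum, Finset.sum_apply,
      Pi.smul_apply, smul_eq_mul]
    refine (Finset.abs_sum_le_sum_abs _ _).trans (Finset.sum_le_sum fun t _ => ?_)
    rw [abs_mul, abs_of_nonneg (pow_nonneg t.2.1.le k)]
    exact mul_le_of_le_one_right (abs_nonneg _) (pow_le_one₀ t.2.1.le t.2.2.le)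
  have hanti : ∀ l, l ≠ 0 → AntiMW a b (T (G l)) := by
    intro l hl
    obtain ⟨C, hC⟩ := hbd l
    exact antiMW_of a b g hg1 hg2 _ (coef_tendsto _ C hC) (coef_not_summable _ (hG l hl))
  have hinj : Function.Injective (T ∘ₗ G) := by
    rw [injective_iff_map_eq_zero]
    intro l h
    by_contra hl
    refine (hanti l hl).2.2 ?_
    have h' : T (G l) = 0 := h
    rw [h']
    simpa using summable_zero
  refine ⟨LinearMap.range (T ∘ₗ G), ?_, ?_⟩
  · rw [← (LinearEquiv.ofInjective (T ∘ₗ G) hinj).rank_eq, rank_finsupp_self',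
      Cardinal.mk_Ioo_real zero_lt_one]
  · rintro _ ⟨l, rfl⟩ hne
    refine hanti l ?_
    rintro rfl
    exact hne (map_zero _)
end

section
/- Let [a,b] be a nondegenerate compact interval. The family 𝒜ℳ𝒲 is spaceable in c₀(C([a,b])): there exists an infinite-dimensional linear subspace 𝓜 of c₀(C([a,b])) that is closed with respect to the norm ‖(fₙ)ₙ‖ = supₙ ‖fₙ‖∞ and satisfies 𝓜 \ {0} ⊂ 𝒜ℳ𝒲. -/
open Filter Topology ZeroAtInfty

noncomputable def bmp (a b : ℝ) (n : ℕ) : C(Set.Icc a b, ℝ) where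
  toFun x := max 0 (1 - 4 * |2 ^ n * ((x.1 - a) / (b - a)) - 1|)
  continuous_toFun := by fun_prop

noncomputable def pk (a b : ℝ) (hab : a < b) (n : ℕ) : Set.Icc a b :=
  ⟨a + (b - a) / 2 ^ n, by
    have h : 0 < b - a := by linarith
    have h1 : (1 : ℝ) ≤ 2 ^ n := one_le_pow₀ (by norm_num)
    have h2 : (b - a) / 2 ^ n ≤ b - a := div_le_self h.le h1
    have h3 : 0 < (b - a) / 2 ^ n := by positivity
    constructor <;> linarith⟩

lemma bmp_pk (a b : ℝ) (hab : a < b) (n : ℕ) : bmp a b n (pk a b hab n) = 1 := by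
  have h : b - a ≠ 0 := by linarith
  have : (2 : ℝ) ^ n * ((a + (b - a) / 2 ^ n - a) / (b - a)) - 1 = 0 := by
    field_simp; ring
  simp only [bmp, pk, ContinuousMap.coe_mk, this]
  norm_num

lemma bmp_abs (a b : ℝ) (n : ℕ) (x : Set.Icc a b) : |bmp a b n x| ≤ 1 := by
  simp only [bmp, ContinuousMap.coe_mk]
  rw [abs_of_nonneg (le_max_left _ _)]
  apply max_le (by norm_num)
  have := abs_nonneg (2 ^ n * ((x.1 - a) / (b - a)) - 1)
  linarith

lemma bmp_norm (a b : ℝ) (n : ℕ) : ‖bmp a b n‖ ≤ 1 :=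
  (ContinuousMap.norm_le _ zero_le_one).2 (bmp_abs a b n)

lemma bmp_ne (a b : ℝ) (n : ℕ) (x : Set.Icc a b) (h : bmp a b n x ≠ 0) :
    3 / 4 < 2 ^ n * ((x.1 - a) / (b - a)) ∧ 2 ^ n * ((x.1 - a) / (b - a)) < 5 / 4 := by
  by_contra hc
  apply h
  simp only [bmp, ContinuousMap.coe_mk]
  apply max_eq_left
  by_contra h2
  push Not at h2
  have h3 : |2 ^ n * ((x.1 - a) / (b - a)) - 1| < 1 / 4 := by linarith
  rw [abs_lt] at h3
  exact hc ⟨by linarith, by linarith⟩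

lemma bmp_disj_lt (a b : ℝ) (m n : ℕ) (hmn : m < n) (x : Set.Icc a b)
    (hm : bmp a b m x ≠ 0) (hn : bmp a b n x ≠ 0) : False := by
  have h1 := (bmp_ne a b m x hm).1
  have h2 := (bmp_ne a b n x hn).2
  obtain ⟨k, rfl⟩ := Nat.exists_eq_add_of_lt hmn
  have h3 : (1 : ℝ) ≤ 2 ^ k := one_le_pow₀ (by norm_num)
  have h4 : (2 : ℝ) ^ (m + k + 1) * ((x.1 - a) / (b - a)) =
    2 * 2 ^ k * (2 ^ m * ((x.1 - a) / (b - a))) := by ring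
  rw [h4] at h2
  nlinarith

lemma bmp_disj (a b : ℝ) (m n : ℕ) (x : Set.Icc a b)
    (hm : bmp a b m x ≠ 0) (hn : bmp a b n x ≠ 0) : m = n := by
  rcases lt_trichotomy m n with h | h | h
  · exact (bmp_disj_lt a b m n h x hm hn).elim
  · exact h
  · exact (bmp_disj_lt a b n m h x hn hm).elim

noncomputable def coefL (a b : ℝ) (hab : a < b) (j : ℕ) : C₀(ℕ, C(Set.Icc a b, ℝ)) →ₗ[ℝ] ℝ where
  toFun F := F (Nat.pair j 0) (pk a b hab (Nat.pair j 0))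
  map_add' F G := by simp
  map_smul' c F := by simp

lemma cont_eval (a b : ℝ) (n : ℕ) (x : Set.Icc a b) :
    Continuous fun F : C₀(ℕ, C(Set.Icc a b, ℝ)) => F n x := by
  rw [Metric.continuous_iff]
  intro F ε hε
  refine ⟨ε, hε, fun G hG => lt_of_le_of_lt ?_ hG⟩
  calc dist (G n x) (F n x) ≤ dist (G n) (F n) := ContinuousMap.dist_apply_le_dist x
    _ ≤ dist G.toBCF F.toBCF := BoundedContinuousFunction.dist_coe_le_dist (f := G.toBCF) (g := F.toBCF) n
    _ = dist G F := rfl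

noncomputable def MM (a b : ℝ) (hab : a < b) : Submodule ℝ C₀(ℕ, C(Set.Icc a b, ℝ)) where
  carrier := {F | ∀ (n : ℕ) (x : Set.Icc a b),
    F n x = coefL a b hab n.unpair.1 F * (1 / ((n.unpair.2 : ℝ) + 1) * bmp a b n x)}
  add_mem' := by
    intro F G hF hG n x
    have h1 := hF n x
    have h2 := hG n x
    rw [map_add, add_mul, ← h1, ← h2]; rfl
  zero_mem' := by
    intro n x
    rw [map_zero, zero_mul]; rfl
  smul_mem' := by
    intro c F hF n x
    have h1 := hF n x
    rw [map_smul, smul_eq_mul, mul_assoc, ← h1]; rfl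

lemma MM_closed (a b : ℝ) (hab : a < b) :
    IsClosed (MM a b hab : Set C₀(ℕ, C(Set.Icc a b, ℝ))) := by
  have : (MM a b hab : Set C₀(ℕ, C(Set.Icc a b, ℝ))) = {F | ∀ (n : ℕ) (x : Set.Icc a b),
    F n x = coefL a b hab n.unpair.1 F * (1 / ((n.unpair.2 : ℝ) + 1) * bmp a b n x)} := rfl
  rw [this]
  simp only [Set.ofPred_forall]
  refine isClosed_iInter fun n => isClosed_iInter fun x => ?_
  exact isClosed_eq (cont_eval a b n x) ((cont_eval a b _ _).mul continuous_const)

noncomputable def ee (a b : ℝ) (j : ℕ) : C₀(ℕ, C(Set.Icc a b, ℝ)) where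
  toFun n := (if n.unpair.1 = j then 1 / ((n.unpair.2 : ℝ) + 1) else 0) • bmp a b n
  continuous_toFun := continuous_of_discreteTopology
  zero_at_infty' := by
    rw [Filter.cocompact_eq_cofinite, Metric.tendsto_nhds]
    intro ε hε
    obtain ⟨K, hK⟩ := exists_nat_one_div_lt hε
    rw [Filter.eventually_cofinite]
    refine ((Finset.range K).image (Nat.pair j)).finite_toSet.subset ?_
    intro n hn
    simp only [Set.mem_setOf_eq, dist_zero_right, not_lt] at hn
    have hb := bmp_norm a b n
    rw [norm_smul] at hn
    split_ifs at hn with h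
    · simp only [Finset.coe_image, Set.mem_image, Finset.coe_range, Set.mem_Iio]
      refine ⟨n.unpair.2, ?_, by rw [← h, Nat.pair_unpair]⟩
      by_contra hc
      push Not at hc
      have h1 : (1 : ℝ) / ((n.unpair.2 : ℝ) + 1) ≤ 1 / ((K : ℝ) + 1) := by
        have : (K : ℝ) ≤ n.unpair.2 := by exact_mod_cast hc
        gcongr
      have h0 : (0 : ℝ) ≤ 1 / ((n.unpair.2 : ℝ) + 1) := by positivity
      rw [Real.norm_of_nonneg h0] at hn
      nlinarith [norm_nonneg (bmp a b n)]
    · simp at hn; linarith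

lemma ee_apply (a b : ℝ) (j n : ℕ) (x : Set.Icc a b) : ee a b j n x =
    (if n.unpair.1 = j then 1 / ((n.unpair.2 : ℝ) + 1) else 0) * bmp a b n x := rfl

lemma coef_ee (a b : ℝ) (hab : a < b) (i j : ℕ) :
    coefL a b hab i (ee a b j) = if i = j then 1 else 0 := by
  change ee a b j (Nat.pair i 0) (pk a b hab (Nat.pair i 0)) = _
  rw [ee_apply, bmp_pk, Nat.unpair_pair]
  simp

lemma ee_mem (a b : ℝ) (hab : a < b) (j : ℕ) : ee a b j ∈ MM a b hab := by
  intro n x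
  rw [coef_ee, ee_apply]
  split_ifs <;> ring

lemma MM_inf (a b : ℝ) (hab : a < b) : ¬ FiniteDimensional ℝ (MM a b hab) := by
  intro hfd
  let L : MM a b hab →ₗ[ℝ] (ℕ → ℝ) := (LinearMap.pi (coefL a b hab)).comp (MM a b hab).subtype
  have hli : LinearIndependent ℝ (fun j => (⟨ee a b j, ee_mem a b hab j⟩ : MM a b hab)) := by
    apply LinearIndependent.of_comp L
    convert Pi.linearIndependent_single_one ℕ ℝ using 1
    funext j i
    change coefL a b hab i (ee a b j) = _
    rw [coef_ee, Pi.single_apply]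
  have := hli.finite
  exact not_finite ℕ

lemma MM_amw (a b : ℝ) (hab : a < b) (F : C₀(ℕ, C(Set.Icc a b, ℝ))) (hF : F ∈ MM a b hab)
    (hF0 : F ≠ 0) : AntiMW a b (fun n => F n) := by
  have hne : ∀ n x, F n x ≠ 0 → bmp a b n x ≠ 0 := by
    intro n x h h'
    apply h
    rw [hF n x, h']; ring
  have hdis : ∀ m n x, F m x ≠ 0 → F n x ≠ 0 → m = n := fun m n x hm hn =>
    bmp_disj a b m n x (hne m x hm) (hne n x hn)
  have hcase : ∀ x, ∃ m, ∀ n, n ≠ m → F n x = 0 := by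
    intro x
    by_cases h : ∃ m, F m x ≠ 0
    · obtain ⟨m, hm⟩ := h
      exact ⟨m, fun n hn => by_contra fun h => hn (hdis n m x h hm)⟩
    · push Not at h
      exact ⟨0, fun n _ => h n⟩
  refine ⟨fun x => ?_, ?_, ?_⟩
  · obtain ⟨m, hm⟩ := hcase x
    refine summable_of_ne_finset_zero (s := {m}) fun n hn => ?_
    rw [hm n (by simpa using hn), abs_zero]
  · choose m hm using hcase
    refine ⟨fun x => F (m x) x, ?_⟩
    rw [Metric.tendstoUniformly_iff]
    intro ε hε
    have ht : Tendsto F atTop (𝓝 0) := by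
      have := F.zero_at_infty'
      rwa [Filter.cocompact_eq_cofinite, Nat.cofinite_eq_atTop] at this
    obtain ⟨N, hN⟩ := Filter.eventually_atTop.1 (Metric.tendsto_nhds.1 ht ε hε)
    filter_upwards [eventually_ge_atTop N] with M hM x
    by_cases h : m x < M
    · have : ∑ n ∈ Finset.range M, F n x = F (m x) x :=
        Finset.sum_eq_single_of_mem _ (Finset.mem_range.2 h) fun n _ hn => hm x n hn
      simpa [this] using hε
    · have : ∑ n ∈ Finset.range M, F n x = 0 := by
        refine Finset.sum_eq_zero fun n hn => hm x n ?_
        rintro rfl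
        exact h (Finset.mem_range.1 hn)
      simp only [this]
      have h2 := hN (m x) (by omega)
      rw [dist_zero_right] at h2 ⊢
      exact lt_of_le_of_lt ((F (m x)).norm_coe_le_norm x) h2
  · intro hs
    have : ∃ j, coefL a b hab j F ≠ 0 := by
      by_contra hc
      push Not at hc
      apply hF0
      ext n x
      rw [hF n x, hc, zero_mul]; rfl
    obtain ⟨j, hj⟩ := this
    have hinj : Function.Injective (Nat.pair j) := fun k l h => (Nat.pair_eq_pair.1 h).2
    have hs2 := hs.comp_injective hinj
    have hs3 : Summable fun k : ℕ => |coefL a b hab j F| * (1 / ((k : ℝ) + 1)) := by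
      refine Summable.of_nonneg_of_le (fun k => by positivity) (fun k => ?_) hs2
      have h := hF (Nat.pair j k) (pk a b hab (Nat.pair j k))
      rw [bmp_pk, Nat.unpair_pair, mul_one] at h
      have h3 := (F (Nat.pair j k)).norm_coe_le_norm (pk a b hab (Nat.pair j k))
      rw [h, norm_mul, Real.norm_eq_abs, Real.norm_of_nonneg (by positivity)] at h3
      exact h3
    rw [summable_mul_left_iff (abs_ne_zero.2 hj)] at hs3
    refine Real.not_summable_one_div_natCast ?_
    rw [← summable_nat_add_iff 1]
    simpa using hs3

/-- 𝒜ℳ𝒲 is spaceable in `c₀(C([a,b]))` (here realized as the space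
`C₀(ℕ, C([a,b]))` of sequences of continuous functions whose sup norms tend to zero,
with the norm `‖(fₙ)ₙ‖ = supₙ ‖fₙ‖∞`). -/
theorem stmt11 (a b : ℝ) (hab : a < b) :
    ∃ 𝓜 : Submodule ℝ C₀(ℕ, C(Set.Icc a b, ℝ)),
      IsClosed (𝓜 : Set C₀(ℕ, C(Set.Icc a b, ℝ))) ∧
      ¬ FiniteDimensional ℝ 𝓜 ∧
      ∀ F ∈ 𝓜, F ≠ 0 → AntiMW a b (fun n => F n) := by
  exact ⟨MM a b hab, MM_closed a b hab, MM_inf a b hab, MM_amw a b hab⟩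
end

section
/- Let (aₙ)_{n≥1} be a real sequence with aₙ → 0 such that ∑ₙ |aₙ|^p = +∞ for every p ≥ 1, and let P be a nonzero real polynomial in one variable with P(0) = 0. Then the sequence (P(aₙ))ₙ converges to 0 and ∑ₙ |P(aₙ)| = +∞, i.e. (P(aₙ))ₙ ∈ c₀ \ ℓ₁. -/
open Filter Topology

theorem stmt13 (a : ℕ → ℝ) (ha0 : Tendsto a atTop (nhds 0))
    (hap : ∀ p : ℝ, 1 ≤ p → ¬ Summable fun n => |a n| ^ p)
    (P : Polynomial ℝ) (hP : P ≠ 0) (hP0 : P.eval 0 = 0) :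
    Tendsto (fun n => P.eval (a n)) atTop (nhds 0) ∧
    ¬ Summable fun n => |P.eval (a n)| := by
  have hc : ∀ R : Polynomial ℝ, Tendsto (fun n => R.eval (a n)) atTop (nhds (R.eval 0)) :=
    fun R => (R.continuous.tendsto 0).comp ha0
  refine ⟨by simpa [hP0] using hc P, fun hs => ?_⟩
  obtain ⟨Q, hQ, hnd⟩ := Polynomial.exists_eq_pow_rootMultiplicity_mul_and_not_dvd P hP 0
  have hk : 0 < P.rootMultiplicity 0 := (Polynomial.rootMultiplicity_pos hP).2 hP0
  generalize P.rootMultiplicity 0 = k at hQ hk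
  rw [Polynomial.dvd_iff_isRoot, Polynomial.IsRoot.def] at hnd
  have hpos : 0 < |Q.eval 0| := abs_pos.2 hnd
  have hev := (hc Q).abs.eventually (lt_mem_nhds (half_lt_self hpos))
  apply hap (k : ℝ) (by exact_mod_cast hk)
  refine Summable.of_norm_bounded_eventually_nat (hs.mul_left (|Q.eval 0| / 2)⁻¹) ?_
  filter_upwards [hev] with n hn
  have e : |P.eval (a n)| = |a n| ^ k * |Q.eval (a n)| := by
    rw [hQ]; simp [abs_mul]
  rw [e, Real.rpow_natCast, Real.norm_of_nonneg (by positivity), ← div_eq_inv_mul,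
    le_div_iff₀ (by positivity)]
  gcongr
end

section
/- Let [a,b] be a nondegenerate compact interval. Let (aₙ)_{n≥1} be a real sequence with aₙ → 0 and ∑ₙ |aₙ|^p = +∞ for all p ≥ 1, and let {gᵢ}_{i∈I} be a family generating a free algebra in C([a,b]). Then there exists a family {(uₙⁱ)ₙ}_{i∈I} of sequences in C([a,b])^ℕ such that the family { (aₙuₙⁱ)ₙ : i ∈ I } generates a free algebra 𝒜 in C([a,b])^ℕ (with coordinatewise operations) satisfying 𝒜 \ {0} ⊂ 𝒜ℳ𝒲; that is, for every N ∈ ℕ, every nonzero real polynomial P in N variables with zero constant term, and all pairwise distinct i₁,…,i_N ∈ I, the sequence P((aₙuₙ^{i₁})ₙ, …, (aₙuₙ^{i_N})ₙ) is a nonzero element of 𝒜ℳ𝒲. -/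
open Filter Topology

/-- A family in a commutative real algebra generates a free algebra. -/
def GeneratesFreeAlgebra {A : Type*} [CommRing A] [Algebra ℝ A]
    {I : Type*} (g : I → A) : Prop :=
  ∀ (N : ℕ) (P : MvPolynomial (Fin N) ℝ), P ≠ 0 → MvPolynomial.coeff 0 P = 0 →
    ∀ v : Fin N → I, Function.Injective v →
      MvPolynomial.aeval (fun k => g (v k)) P ≠ 0


/-- Clamped affine map sending the n-th small interval onto [a,b]. -/
noncomputable def psiMap (a b : ℝ) (hab : a ≤ b) (n : ℕ) : C(Set.Icc a b, Set.Icc a b) where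
  toFun x := Set.projIcc a b hab (a + (n+1) * ((n+2) * (x.1 - a) - (b - a)))
  continuous_toFun := by
    refine continuous_projIcc.comp ?_
    fun_prop

/-- Bump. -/
noncomputable def hFun (a b : ℝ) : C(Set.Icc a b, ℝ) where
  toFun x := (x.1 - a) * (b - x.1)
  continuous_toFun := by fun_prop

lemma psi_surj (a b : ℝ) (hab : a < b) (n : ℕ) (y : Set.Icc a b) :
    ∃ x, psiMap a b hab.le n x = y := by
  obtain ⟨y, hy1, hy2⟩ := y
  have hn : (0:ℝ) ≤ n := n.cast_nonneg
  refine ⟨⟨a + (y - a + (b-a)*(n+1)) / ((n+1)*(n+2)), ?_, ?_⟩, ?_⟩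
  · have : 0 ≤ (y - a + (b-a)*(n+1)) / ((n+1)*(n+2)) := by
      have : 0 ≤ b - a := by linarith
      have : 0 ≤ y - a := by linarith
      positivity
    linarith
  · have : (y - a + (b-a)*(n+1)) / ((n+1)*(n+2)) ≤ b - a := by
      rw [div_le_iff₀ (by positivity)]
      nlinarith [mul_nonneg hn (sub_nonneg.2 hab.le), mul_nonneg hn (mul_nonneg hn (sub_nonneg.2 hab.le))]
    linarith
  · have : a + ((n:ℝ)+1) * ((n+2) * ((a + (y - a + (b-a)*(n+1)) / ((n+1)*(n+2))) - a) - (b - a)) = y := by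
      field_simp
      ring
    simp only [psiMap, ContinuousMap.coe_mk, this]
    exact Set.projIcc_of_mem hab.le ⟨hy1, hy2⟩

lemma h_psi (a b : ℝ) (hab : a < b) (n : ℕ) (x : Set.Icc a b)
    (h : hFun a b (psiMap a b hab.le n x) ≠ 0) :
    b - a < (n+2) * (x.1 - a) ∧ (n+1) * (x.1 - a) < b - a := by
  have hn : (0:ℝ) ≤ n := n.cast_nonneg
  constructor
  · by_contra! hc
    apply h
    have : a + ((n:ℝ)+1) * ((n+2) * (x.1 - a) - (b - a)) ≤ a := by nlinarith
    simp [hFun, psiMap, Set.projIcc_of_le_left hab.le this]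
  · by_contra! hc
    apply h
    have : b ≤ a + ((n:ℝ)+1) * ((n+2) * (x.1 - a) - (b - a)) := by nlinarith
    simp [hFun, psiMap, Set.projIcc_of_right_le hab.le this]

lemma h_psi_unique (a b : ℝ) (hab : a < b) (m n : ℕ) (x : Set.Icc a b)
    (h : hFun a b (psiMap a b hab.le n x) ≠ 0)
    (h' : hFun a b (psiMap a b hab.le m x) ≠ 0) : m = n := by
  have key : ∀ m n : ℕ, hFun a b (psiMap a b hab.le n x) ≠ 0 →
      hFun a b (psiMap a b hab.le m x) ≠ 0 → ¬ m < n := by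
    intro m n h h' hlt
    obtain ⟨_, h2⟩ := h_psi a b hab n x h
    obtain ⟨h1, _⟩ := h_psi a b hab m x h'
    have hx : 0 ≤ x.1 - a := by linarith [x.2.1]
    have : (m:ℝ) + 1 ≤ n := by exact_mod_cast hlt
    nlinarith
  have := key m n h h'
  have := key n m h' h
  omega

lemma aeval_homog {N : ℕ} (w : Fin N → ℝ) (d : ℕ) (φ : MvPolynomial (Fin N) ℝ)
    (hφ : φ.IsHomogeneous d) :
    MvPolynomial.aeval (fun k => Polynomial.C (w k) * Polynomial.X) φ =
      Polynomial.C (MvPolynomial.eval w φ) * Polynomial.X ^ d := by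
  rw [MvPolynomial.aeval_def, MvPolynomial.eval₂_eq, MvPolynomial.eval_eq, map_sum, Finset.sum_mul]
  refine Finset.sum_congr rfl fun s hs => ?_
  have hd := hφ (MvPolynomial.mem_support_iff.1 hs)
  have : ∑ i ∈ s.support, s i = d := by
    rw [← hd, Finsupp.weight_apply, Finsupp.sum]; simp
  simp only [mul_pow, Finset.prod_mul_distrib, Finset.prod_pow_eq_pow_sum, this, map_mul, map_prod,
    map_pow, Polynomial.algebraMap_eq]
  ring

lemma coeff_line {N : ℕ} (w : Fin N → ℝ) (d : ℕ) (P : MvPolynomial (Fin N) ℝ) :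
    (MvPolynomial.aeval (fun k => Polynomial.C (w k) * Polynomial.X) P : Polynomial ℝ).coeff d =
      MvPolynomial.eval w (MvPolynomial.homogeneousComponent d P) := by
  conv_lhs => rw [← MvPolynomial.sum_homogeneousComponent P]
  rw [map_sum]
  simp_rw [aeval_homog w _ _ (MvPolynomial.homogeneousComponent_isHomogeneous _ P)]
  simp only [Polynomial.finset_sum_coeff, Polynomial.coeff_C_mul, Polynomial.coeff_X_pow]
  simp only [mul_ite, mul_one, mul_zero, Finset.sum_ite_eq, Finset.mem_range]
  split_ifs with h
  · rfl
  · rw [MvPolynomial.homogeneousComponent_eq_zero _ _ (by omega)]; simp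

lemma eval_line {N : ℕ} (w : Fin N → ℝ) (t : ℝ) (P : MvPolynomial (Fin N) ℝ) :
    (MvPolynomial.aeval (fun k => Polynomial.C (w k) * Polynomial.X) P : Polynomial ℝ).eval t =
      MvPolynomial.eval (fun k => t * w k) P := by
  rw [← Polynomial.coe_evalRingHom, MvPolynomial.aeval_def, MvPolynomial.hom_eval₂,
    MvPolynomial.eval, MvPolynomial.coe_eval₂Hom]
  congr 1
  · ext r; simp
  · ext k; simp only [Function.comp, Polynomial.coe_evalRingHom, Polynomial.eval_mul, Polynomial.eval_C, Polynomial.eval_X]; exact mul_comm _ _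

lemma eval_zero_fun {N : ℕ} (P : MvPolynomial (Fin N) ℝ) (hP0 : MvPolynomial.coeff 0 P = 0) :
    MvPolynomial.eval (fun _ => (0:ℝ)) P = 0 := by
  have h : MvPolynomial.eval (0 : Fin N → ℝ) P = MvPolynomial.coeff 0 P := by
    rw [MvPolynomial.eval_zero, MvPolynomial.constantCoeff_eq]
  rw [hP0] at h
  exact h

lemma aeval_pt {X : Type*} [TopologicalSpace X] {N : ℕ} (f : Fin N → C(X, ℝ))
    (P : MvPolynomial (Fin N) ℝ) (x : X) :
    (MvPolynomial.aeval f P) x = MvPolynomial.eval (fun k => f k x) P := by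
  induction P using MvPolynomial.induction_on with
  | C r => simp [MvPolynomial.aeval_C]
  | add p q hp hq => simp [hp, hq]
  | mul_X p k hp => simp [hp]

lemma exists_pt (a b : ℝ) (hab : a < b) (f : C(Set.Icc a b, ℝ)) (hf : f ≠ 0) :
    ∃ x, f x ≠ 0 ∧ hFun a b x ≠ 0 := by
  by_contra! hc
  apply hf
  haveI : PreconnectedSpace (Set.Icc a b) := Subtype.preconnectedSpace isPreconnected_Icc
  haveI : Nontrivial (Set.Icc a b) := ⟨⟨⟨a, by simp [hab.le]⟩, ⟨b, by simp [hab.le]⟩, by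
    simp [Subtype.ext_iff, hab.ne]⟩⟩
  have hd : Dense (Set.univ \ ({⟨a, by simp [hab.le]⟩, ⟨b, by simp [hab.le]⟩} : Set (Set.Icc a b))) :=
    dense_univ.diff_finite (Set.toFinite _)
  apply DFunLike.coe_injective
  refine Continuous.ext_on hd f.continuous (0 : C(Set.Icc a b, ℝ)).continuous ?_
  intro x hx
  by_contra h0
  have h1 := hc x h0
  simp only [Set.mem_diff, Set.mem_univ, true_and, Set.mem_insert_iff, Set.mem_singleton_iff,
    Subtype.ext_iff, not_or] at hx
  simp only [hFun, ContinuousMap.coe_mk, mul_eq_zero, sub_eq_zero] at h1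
  rcases h1 with h1 | h1
  · exact hx.1 h1
  · exact hx.2 h1.symm

lemma exists_line (a b : ℝ) (hab : a < b) {I : Type*} (g : I → C(Set.Icc a b, ℝ))
    (hg : GeneratesFreeAlgebra g) (N : ℕ) (P : MvPolynomial (Fin N) ℝ) (hP : P ≠ 0)
    (hP0 : MvPolynomial.coeff 0 P = 0) (v : Fin N → I) (hv : Function.Injective v) :
    ∃ x : Set.Icc a b, (MvPolynomial.aeval
      (fun k => Polynomial.C ((g (v k) * hFun a b) x) * Polynomial.X) P : Polynomial ℝ) ≠ 0 := by
  obtain ⟨d, hd⟩ : ∃ d, MvPolynomial.homogeneousComponent d P ≠ 0 := by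
    by_contra! hc
    apply hP
    rw [← MvPolynomial.sum_homogeneousComponent P]
    exact Finset.sum_eq_zero fun i _ => hc i
  have h1 := hg N _ hd (by rw [MvPolynomial.coeff_homogeneousComponent]; simp [hP0]) v hv
  obtain ⟨x, hx, hhx⟩ := exists_pt a b hab _ h1
  refine ⟨x, fun h0 => ?_⟩
  have h2 := coeff_line (fun k => (g (v k) * hFun a b) x) d P
  rw [h0, Polynomial.coeff_zero] at h2
  have h3 := eval_line (fun k => g (v k) x) (hFun a b x) (MvPolynomial.homogeneousComponent d P)
  rw [aeval_homog _ d _ (MvPolynomial.homogeneousComponent_isHomogeneous _ P)] at h3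
  simp only [ContinuousMap.mul_apply] at h2
  simp only [mul_comm (hFun a b x)] at h3
  rw [← h2] at h3
  rw [aeval_pt] at hx
  simp at h3
  rcases h3 with h3 | h3
  · exact hx h3
  · exact hhx h3.1

lemma poly_lower (p : Polynomial ℝ) (hp : p ≠ 0) (h0 : p.eval 0 = 0) :
    ∃ m : ℕ, 1 ≤ m ∧ ∃ δ > 0, ∀ᶠ t in 𝓝 (0:ℝ), δ * |t| ^ m ≤ |p.eval t| := by
  obtain ⟨q, hq, hnd⟩ := Polynomial.exists_eq_pow_rootMultiplicity_mul_and_not_dvd p hp 0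
  refine ⟨p.rootMultiplicity 0, (Polynomial.rootMultiplicity_pos hp).2 h0, ?_⟩
  generalize p.rootMultiplicity 0 = m at *
  rw [Polynomial.dvd_iff_isRoot, Polynomial.IsRoot] at hnd
  have hpos : 0 < |q.eval 0| := abs_pos.2 hnd
  refine ⟨|q.eval 0| / 2, by positivity, ?_⟩
  have hcont : Tendsto (fun t => |q.eval t|) (𝓝 0) (𝓝 |q.eval 0|) :=
    (continuous_abs.comp q.continuous).tendsto 0
  filter_upwards [hcont.eventually (lt_mem_nhds (half_lt_self hpos))] with t ht
  rw [hq]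
  simp only [map_zero, sub_zero, Polynomial.eval_mul, Polynomial.eval_pow, Polynomial.eval_X,
    abs_mul, abs_pow]
  rw [mul_comm]
  gcongr

lemma aeval_tendsto {X : Type*} [TopologicalSpace X] [CompactSpace X] {N : ℕ} (w : Fin N → C(X, ℝ))
    (P : MvPolynomial (Fin N) ℝ) (hP0 : MvPolynomial.coeff 0 P = 0) (c : ℕ → ℝ)
    (hc : Tendsto c atTop (𝓝 0)) :
    Tendsto (fun n => ‖MvPolynomial.aeval (fun k => c n • w k) P‖) atTop (𝓝 0) := by
  have hcont : Continuous fun t : ℝ => ‖MvPolynomial.aeval (fun k => t • w k) P‖ := by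
    simp only [MvPolynomial.aeval_def, MvPolynomial.eval₂_eq]
    fun_prop
  have := (hcont.tendsto 0).comp hc
  have h0 : MvPolynomial.aeval (fun k => (0:ℝ) • w k) P = 0 := by
    ext x
    rw [aeval_pt]
    simp only [zero_smul, ContinuousMap.zero_apply]
    exact eval_zero_fun P hP0
  rw [h0, norm_zero] at this
  exact this

lemma unif {X : Type*} (f : ℕ → X → ℝ) (B : ℕ → ℝ) (hB : Tendsto B atTop (𝓝 0))
    (hf : ∀ n x, |f n x| ≤ B n) (hu : ∀ x, ∃ n₀, ∀ n, n ≠ n₀ → f n x = 0) :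
    (∀ x, Summable fun n => |f n x|) ∧ ∃ S : X → ℝ,
      TendstoUniformly (fun N x => ∑ n ∈ Finset.range N, f n x) S atTop := by
  choose k hk using hu
  constructor
  · intro x
    exact summable_of_ne_finset_zero (s := {k x}) fun n hn => by
      rw [hk x n (by simpa using hn), abs_zero]
  · refine ⟨fun x => f (k x) x, Metric.tendstoUniformly_iff.2 fun ε hε => ?_⟩
    obtain ⟨M, hM⟩ := (hB.eventually (gt_mem_nhds hε)).exists_forall_of_atTop
    filter_upwards [eventually_ge_atTop M] with n hn x
    by_cases h : k x < n
    · rw [Finset.sum_eq_single (k x) (fun m _ hm => hk x m hm) (fun h' => by simp [h] at h')]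
      simpa using hε
    · rw [Finset.sum_eq_zero fun m hm => hk x m (by simp at hm; omega)]
      simp only [dist_zero_right, Real.norm_eq_abs]
      exact (hf _ _).trans_lt (hM _ (by omega))

theorem stmt14 (a b : ℝ) (hab : a < b) (c : ℕ → ℝ)
    (hc0 : Tendsto c atTop (nhds 0))
    (hcp : ∀ p : ℝ, 1 ≤ p → ¬ Summable fun n => |c n| ^ p)
    {I : Type*} (g : I → C(Set.Icc a b, ℝ)) (hg : GeneratesFreeAlgebra g) :
    ∃ u : I → ℕ → C(Set.Icc a b, ℝ),
      ∀ (N : ℕ) (P : MvPolynomial (Fin N) ℝ), P ≠ 0 →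
        MvPolynomial.coeff 0 P = 0 →
        ∀ v : Fin N → I, Function.Injective v →
          (fun n => MvPolynomial.aeval (fun k => c n • u (v k) n) P) ≠
              (0 : ℕ → C(Set.Icc a b, ℝ)) ∧
          AntiMW a b (fun n => MvPolynomial.aeval (fun k => c n • u (v k) n) P) := by
  refine ⟨fun i n => (g i * hFun a b).comp (psiMap a b hab.le n), ?_⟩
  intro N P hP hP0 v hv
  have hE0 : MvPolynomial.eval (fun _ => (0:ℝ)) P = 0 := by
    exact eval_zero_fun P hP0
  have hns : ¬ Summable fun n => ‖MvPolynomial.aeval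
      (fun k => c n • (g (v k) * hFun a b).comp (psiMap a b hab.le n)) P‖ := by
    intro hs
    obtain ⟨x, hx⟩ := exists_line a b hab g hg N P hP hP0 v hv
    obtain ⟨m, hm, δ, hδ, hev⟩ := poly_lower _ hx (by rw [eval_line]; simpa using hE0)
    apply hcp m (by exact_mod_cast hm)
    have h1 : ∀ᶠ n in atTop, δ * |c n| ^ m ≤ ‖MvPolynomial.aeval
        (fun k => c n • (g (v k) * hFun a b).comp (psiMap a b hab.le n)) P‖ := by
      filter_upwards [hc0.eventually hev] with n hn
      obtain ⟨y, hy⟩ := psi_surj a b hab n x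
      refine hn.trans ?_
      rw [eval_line]
      refine le_trans (le_of_eq ?_) (ContinuousMap.norm_coe_le_norm _ y)
      rw [aeval_pt, Real.norm_eq_abs]
      simp [hy]
    have h2 : Summable fun n => δ * |c n| ^ m := by
      refine Summable.of_norm_bounded_eventually_nat hs ?_
      filter_upwards [h1] with n hn
      rwa [Real.norm_of_nonneg (by positivity)]
    simp only [Real.rpow_natCast]
    exact (summable_mul_left_iff hδ.ne').1 h2
  refine ⟨fun h0 => hns ?_, ?_⟩
  · have : ∀ n, MvPolynomial.aeval
        (fun k => c n • (g (v k) * hFun a b).comp (psiMap a b hab.le n)) P = 0 := fun n => congrFun h0 n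
    simp only [this, norm_zero]; exact summable_zero
  have hpt : ∀ n x, (MvPolynomial.aeval
        (fun k => c n • (g (v k) * hFun a b).comp (psiMap a b hab.le n)) P) x =
        (MvPolynomial.aeval (fun k => c n • (g (v k) * hFun a b)) P) (psiMap a b hab.le n x) := by
    intro n x
    rw [aeval_pt, aeval_pt]; rfl
  obtain ⟨h1, h2⟩ := unif (fun n x => (MvPolynomial.aeval
        (fun k => c n • (g (v k) * hFun a b).comp (psiMap a b hab.le n)) P) x)
    _ (aeval_tendsto (fun k => g (v k) * hFun a b) P hP0 c hc0)
    (fun n x => by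
      rw [hpt, ← Real.norm_eq_abs]
      exact ContinuousMap.norm_coe_le_norm _ _)
    (fun x => by
      have hz : ∀ n, hFun a b (psiMap a b hab.le n x) = 0 → (MvPolynomial.aeval
        (fun k => c n • (g (v k) * hFun a b).comp (psiMap a b hab.le n)) P) x = 0 := by
        intro n hn
        rw [aeval_pt]
        simp only [ContinuousMap.smul_apply, ContinuousMap.comp_apply, ContinuousMap.mul_apply, hn,
          mul_zero, smul_zero]
        exact hE0
      by_cases h : ∃ n, hFun a b (psiMap a b hab.le n x) ≠ 0
      · obtain ⟨n₀, hn₀⟩ := h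
        refine ⟨n₀, fun n hn => hz n ?_⟩
        by_contra h'
        exact hn (h_psi_unique a b hab n n₀ x hn₀ h')
      · push Not at h
        exact ⟨0, fun n _ => hz n (h n)⟩)
  exact ⟨h1, h2, hns⟩
end

section
/- Let [a,b] be a nondegenerate compact interval. Let {(aₙⁱ)ₙ}_{i∈I} be a family of real sequences generating a free algebra 𝓛 (under coordinatewise operations) such that every nonzero element of 𝓛 lies in c₀ \ ℓ₁, and let (uₙ)_{n≥1} ∈ ℱ with uₙ ≥ 0 on [a,b] for every n. Then the family {(aₙⁱ uₙ)ₙ}_{i∈I} generates a free algebra 𝒜 in C([a,b])^ℕ (with coordinatewise operations) such that 𝒜 \ {0} ⊂ 𝒜ℳ𝒲; that is, for every N ∈ ℕ, every nonzero real polynomial P in N variables with zero constant term, and all pairwise distinct i₁,…,i_N ∈ I, the sequence P((aₙ^{i₁}uₙ)ₙ, …, (aₙ^{i_N}uₙ)ₙ) is a nonzero element of 𝒜ℳ𝒲. -/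
open Filter Topology

theorem aeval_apply_aux (a b : ℝ) {N : ℕ} (P : MvPolynomial (Fin N) ℝ) (y : Fin N → ℝ)
    (w : C(Set.Icc a b, ℝ)) (x : Set.Icc a b) :
    (MvPolynomial.aeval (fun k => y k • w) P : C(Set.Icc a b, ℝ)) x
      = MvPolynomial.eval (fun k => y k * w x) P := by
  induction P using MvPolynomial.induction_on with
  | C r => simp
  | add p q hp hq => simp [hp, hq]
  | mul_X p k hp =>
    simp [hp]
    ring

theorem eval_scale_aux {N : ℕ} (P : MvPolynomial (Fin N) ℝ) (c : ℝ)
    (y : Fin N → ℝ) :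
    MvPolynomial.eval y (MvPolynomial.aeval
      (fun k => MvPolynomial.C c * MvPolynomial.X k : Fin N → MvPolynomial (Fin N) ℝ) P)
      = MvPolynomial.eval (fun k => c * y k) P := by
  induction P using MvPolynomial.induction_on with
  | C r => simp
  | add p q hp hq => rw [map_add, map_add, map_add, hp, hq]
  | mul_X p k hp => rw [map_mul, map_mul, map_mul, hp]; simp

theorem stmt15 (a b : ℝ) (hab : a < b) {I : Type*} (A : I → ℕ → ℝ)
    -- the family {(aₙⁱ)ₙ} generates a free algebra 𝓛 (coordinatewise operations)
    -- all of whose nonzero elements lie in c₀ \ ℓ₁: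
    (hL : ∀ (N : ℕ) (P : MvPolynomial (Fin N) ℝ), P ≠ 0 →
      MvPolynomial.coeff 0 P = 0 →
      ∀ v : Fin N → I, Function.Injective v →
        (fun n => MvPolynomial.eval (fun k => A (v k) n) P) ≠ (0 : ℕ → ℝ) ∧
        Tendsto (fun n => MvPolynomial.eval (fun k => A (v k) n) P) atTop (nhds 0) ∧
        ¬ Summable fun n => |MvPolynomial.eval (fun k => A (v k) n) P|)
    (u : ℕ → C(Set.Icc a b, ℝ)) (hu : MemF a b u)
    (hupos : ∀ n, ∀ x : Set.Icc a b, 0 ≤ u n x) :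
    ∀ (N : ℕ) (P : MvPolynomial (Fin N) ℝ), P ≠ 0 →
      MvPolynomial.coeff 0 P = 0 →
      ∀ v : Fin N → I, Function.Injective v →
        (fun n => MvPolynomial.aeval (fun k => A (v k) n • u n) P) ≠
            (0 : ℕ → C(Set.Icc a b, ℝ)) ∧
        AntiMW a b (fun n => MvPolynomial.aeval (fun k => A (v k) n • u n) P) := by
  classical
  intro N P hP hP0 v hv
  obtain ⟨hdisj, hc, hbdd⟩ := hu
  set c := ⨅ n, ‖u n‖ with hcdef
  have hcle : ∀ n, c ≤ ‖u n‖ := fun n =>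
    ciInf_le ⟨0, by rintro _ ⟨m, rfl⟩; exact norm_nonneg _⟩ n
  have hab' : a ≤ b := hab.le
  haveI : Nonempty (Set.Icc a b) := ⟨⟨a, le_refl a, hab'⟩⟩
  haveI : PreconnectedSpace (Set.Icc a b) :=
    Subtype.preconnectedSpace isPreconnected_Icc
  have hev : ∀ n x, (MvPolynomial.aeval (fun k => A (v k) n • u n) P : C(Set.Icc a b, ℝ)) x
      = MvPolynomial.eval (fun k => A (v k) n * u n x) P := by
    intro n x
    exact aeval_apply_aux a b P (fun k => A (v k) n) (u n) x
  have hmax : ∀ n, ∃ x, u n x = ‖u n‖ := by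
    intro n
    obtain ⟨x, -, hx⟩ := isCompact_univ.exists_isMaxOn Set.univ_nonempty
      (u n).continuous.continuousOn
    refine ⟨x, le_antisymm ((le_abs_self _).trans ((u n).norm_coe_le_norm x)) ?_⟩
    refine (ContinuousMap.norm_le _ (hupos n x)).2 fun y => ?_
    rw [Real.norm_eq_abs, abs_of_nonneg (hupos n y)]
    exact hx (Set.mem_univ y)
  have hzero : ∀ n, ∃ x, u n x = 0 := by
    intro n
    obtain ⟨x, hx⟩ := hmax (n+1)
    refine ⟨x, ?_⟩
    by_contra hne
    have hne' : u (n+1) x ≠ 0 := by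
      rw [hx]; exact (lt_of_lt_of_le hc (hcle _)).ne'
    have : x ∈ Function.support ⇑(u n) ∩ Function.support ⇑(u (n+1)) := ⟨hne, hne'⟩
    rw [hdisj n (n+1) (by omega)] at this
    exact this
  have hval : ∀ n, ∃ x, u n x = c := by
    intro n
    obtain ⟨x, hx⟩ := hmax n
    obtain ⟨y, hy⟩ := hzero n
    exact mem_range_of_exists_le_of_exists_ge (u n).continuous ⟨y, hy ▸ hc.le⟩
      ⟨x, hx ▸ hcle n⟩
  have hPz : MvPolynomial.eval (0 : Fin N → ℝ) P = 0 := by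
    rw [MvPolynomial.eval_zero]; exact hP0
  -- non summability
  have hns : ¬ Summable fun n =>
      ‖(MvPolynomial.aeval (fun k => A (v k) n • u n) P : C(Set.Icc a b, ℝ))‖ := by
    intro hs
    set Q : MvPolynomial (Fin N) ℝ :=
      MvPolynomial.aeval (fun k => MvPolynomial.C c * MvPolynomial.X k) P with hQ
    have hQe : ∀ y : Fin N → ℝ, MvPolynomial.eval y Q
        = MvPolynomial.eval (fun k => c * y k) P := by
      intro y
      have h := eval_scale_aux P c y
      exact h
    have hQ0 : MvPolynomial.coeff 0 Q = 0 := by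
      have h := hQe 0
      rw [MvPolynomial.eval_zero] at h
      have h2 : (fun k : Fin N => c * (0 : Fin N → ℝ) k) = 0 := by ext; simp
      rw [h2, hPz] at h
      exact h
    have hQne : Q ≠ 0 := by
      intro h0
      apply hP
      apply MvPolynomial.funext
      intro y
      have h := hQe (fun k => c⁻¹ * y k)
      rw [h0] at h
      simp only [mul_inv_cancel_left₀ hc.ne', map_zero] at h
      simpa using h.symm
    refine (hL N Q hQne hQ0 v hv).2.2 ?_
    refine Summable.of_nonneg_of_le (fun _ => abs_nonneg _) (fun n => ?_) hs
    obtain ⟨x, hx⟩ := hval n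
    have h := ContinuousMap.norm_coe_le_norm
      (MvPolynomial.aeval (fun k => A (v k) n • u n) P : C(Set.Icc a b, ℝ)) x
    rw [hev, hx, Real.norm_eq_abs] at h
    rw [hQe]
    simpa only [mul_comm] using h
  have hfz : ∀ n x, u n x = 0 →
      (MvPolynomial.aeval (fun k => A (v k) n • u n) P : C(Set.Icc a b, ℝ)) x = 0 := by
    intro n x hx
    rw [hev, hx]
    simp only [mul_zero]
    exact hPz
  have huni : ∀ ε > 0, ∃ M, ∀ n ≥ M, ∀ x,
      |(MvPolynomial.aeval (fun k => A (v k) n • u n) P : C(Set.Icc a b, ℝ)) x| < ε := by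
    intro ε hε
    obtain ⟨B, hB⟩ := hbdd
    have hBu : ∀ n x, |u n x| ≤ B := fun n x =>
      ((u n).norm_coe_le_norm x).trans (hB ⟨n, rfl⟩)
    have hcont : Continuous fun y : Fin N → ℝ => MvPolynomial.eval y P :=
      MvPolynomial.continuous_eval P
    obtain ⟨δ, hδ, hd⟩ := Metric.continuousAt_iff.1 (hcont.continuousAt (x := 0)) ε hε
    have hA : ∀ k, Tendsto (fun n => |A (v k) n| * B) atTop (nhds 0) := by
      intro k
      have h := (hL N (MvPolynomial.X k) (MvPolynomial.X_ne_zero k)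
        (by simp) v hv).2.1
      simp only [MvPolynomial.eval_X] at h
      simpa using h.abs.mul_const B
    have hall : ∀ᶠ n in atTop, ∀ k, |A (v k) n| * B < δ :=
      eventually_all.2 fun k => (hA k).eventually (gt_mem_nhds hδ)
    obtain ⟨M, hM⟩ := eventually_atTop.1 hall
    refine ⟨M, fun n hn x => ?_⟩
    rw [hev]
    have h := hd (x := fun k => A (v k) n * u n x) (by
      rw [dist_zero_right, pi_norm_lt_iff hδ]
      intro k
      rw [Real.norm_eq_abs, abs_mul]
      exact (mul_le_mul_of_nonneg_left (hBu n x) (abs_nonneg _)).trans_lt (hM n hn k))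
    rw [hPz, dist_zero_right, Real.norm_eq_abs] at h
    exact h
  set f : ℕ → C(Set.Icc a b, ℝ) :=
    fun n => MvPolynomial.aeval (fun k => A (v k) n • u n) P with hf
  have hsingle : ∀ x, ∃ m, ∀ n, n ≠ m → f n x = 0 := by
    intro x
    by_cases h : ∃ m, u m x ≠ 0
    · obtain ⟨m, hm⟩ := h
      refine ⟨m, fun n hn => hfz n x ?_⟩
      by_contra hne
      have : x ∈ Function.support ⇑(u n) ∩ Function.support ⇑(u m) := ⟨hne, hm⟩
      rw [hdisj n m hn] at this
      exact this
    · push Not at h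
      exact ⟨0, fun n _ => hfz n x (h n)⟩
  choose m hm using hsingle
  refine ⟨?_, ?_, ⟨fun x => f (m x) x, ?_⟩, hns⟩
  · intro h0
    apply hns
    have : (fun n => ‖f n‖) = fun _ => (0 : ℝ) := by
      ext n; rw [h0]; simp
    show Summable fun n => ‖f n‖
    rw [this]
    exact summable_zero
  · intro x
    refine summable_of_ne_finset_zero (s := {m x}) fun n hn => ?_
    rw [hm x n (by simpa using hn), abs_zero]
  · rw [Metric.tendstoUniformly_iff]
    intro ε hε
    obtain ⟨M, hM⟩ := huni ε hε
    filter_upwards [eventually_ge_atTop M] with K hK x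
    by_cases hmx : m x < K
    · have : ∑ n ∈ Finset.range K, f n x = f (m x) x :=
        Finset.sum_eq_single_of_mem _ (Finset.mem_range.2 hmx) fun n _ hn => hm x n hn
      rw [this, dist_self]
      exact hε
    · have : ∑ n ∈ Finset.range K, f n x = 0 :=
        Finset.sum_eq_zero fun n hn => hm x n (by
          have := Finset.mem_range.1 hn
          omega)
      rw [this, dist_zero_right, Real.norm_eq_abs]
      exact hM (m x) (by omega) x
end

section
/- Let [a,b] be a nondegenerate compact interval. The family 𝒜ℳ𝒲 is strongly 𝔠-algebrable: there exists a set B ⊂ C([a,b])^ℕ of cardinality the continuum 𝔠 such that for every N ∈ ℕ, every nonzero real polynomial P in N variables with zero constant term, and all pairwise distinct b₁,…,b_N ∈ B, the sequence P(b₁,…,b_N) (computed with coordinatewise operations in C([a,b])^ℕ) is a nonzero element of 𝒜ℳ𝒲. -/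
open Filter Topology

noncomputable def amwBump (a b : ℝ) (n : ℕ) : C(Set.Icc a b, ℝ) :=
  ⟨fun x => max 0 (1 - 4 * |2 ^ n * (((x : ℝ) - a) / (b - a)) - 1|), by fun_prop⟩

noncomputable def amwF (a b c : ℝ) (n : ℕ) : C(Set.Icc a b, ℝ) :=
  (Real.log (n + 3) ^ (-c)) • amwBump a b n

lemma amw_log (n : ℕ) : 1 < Real.log ((n : ℝ) + 3) := by
  rw [Real.lt_log_iff_exp_lt (by positivity)]
  have := Real.exp_one_lt_three
  have : (0 : ℝ) ≤ n := by positivity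
  linarith

lemma amwBump_nonneg (a b : ℝ) (n : ℕ) (x : Set.Icc a b) : 0 ≤ amwBump a b n x :=
  le_max_left _ _

lemma amwBump_le (a b : ℝ) (n : ℕ) (x : Set.Icc a b) : amwBump a b n x ≤ 1 := by
  apply max_le zero_le_one
  have := abs_nonneg (2 ^ n * (((x : ℝ) - a) / (b - a)) - 1)
  linarith

lemma amwBump_range (a b : ℝ) (n : ℕ) (x : Set.Icc a b) (h : amwBump a b n x ≠ 0) :
    3/4 < 2 ^ n * (((x : ℝ) - a) / (b - a)) ∧ 2 ^ n * (((x : ℝ) - a) / (b - a)) < 5/4 := by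
  by_contra hc
  apply h
  apply max_eq_left
  by_contra h2
  push Not at h2
  have h3 : |2 ^ n * (((x : ℝ) - a) / (b - a)) - 1| < 1/4 := by linarith
  rw [abs_lt] at h3
  exact hc ⟨by linarith [h3.1], by linarith [h3.2]⟩

lemma amwBump_lt (a b : ℝ) (n m : ℕ) (hnm : n < m) (x : Set.Icc a b)
    (h : amwBump a b n x ≠ 0) (h' : amwBump a b m x ≠ 0) : False := by
  have h1 := amwBump_range a b n x h
  have h2 := amwBump_range a b m x h'
  set t := (((x : ℝ) - a) / (b - a))
  obtain ⟨k, rfl⟩ := Nat.exists_eq_add_of_lt hnm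
  have : (1 : ℝ) ≤ 2 ^ k := one_le_pow₀ (by norm_num)
  have e : (2 : ℝ) ^ (n + k + 1) * t = 2 * (2 ^ k * (2 ^ n * t)) := by ring
  rw [e] at h2
  nlinarith [h1.1, h1.2, h2.1, h2.2]

lemma amwBump_single (a b : ℝ) (x : Set.Icc a b) :
    ∃ k, ∀ n, n ≠ k → amwBump a b n x = 0 := by
  by_cases h : ∃ k, amwBump a b k x ≠ 0
  · obtain ⟨k, hk⟩ := h
    refine ⟨k, fun n hn => ?_⟩
    by_contra h2
    rcases lt_or_gt_of_ne hn with h3 | h3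
    · exact amwBump_lt a b n k h3 x h2 hk
    · exact amwBump_lt a b k n h3 x hk h2
  · push Not at h
    exact ⟨0, fun n _ => h n⟩

lemma amwBump_peak (a b : ℝ) (hab : a < b) (n : ℕ) : ∃ x : Set.Icc a b, amwBump a b n x = 1 := by
  have h0 : 0 < b - a := by linarith
  have h1 : (0 : ℝ) < (1/2) ^ n := by positivity
  have h2 : ((1:ℝ)/2) ^ n ≤ 1 := pow_le_one₀ (by norm_num) (by norm_num)
  refine ⟨⟨a + (b - a) * (1/2) ^ n, ?_, ?_⟩, ?_⟩
  · nlinarith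
  · nlinarith
  · have : (2:ℝ) ^ n * ((a + (b - a) * (1/2) ^ n - a) / (b - a)) = 1 := by
      rw [add_sub_cancel_left, mul_div_cancel_left₀ _ h0.ne', ← mul_pow]
      norm_num
    change max 0 (1 - 4 * |(2:ℝ) ^ n * ((a + (b - a) * (1/2) ^ n - a) / (b - a)) - 1|) = 1
    rw [this]; norm_num

lemma amw_aeval (a b : ℝ) {N : ℕ} (P : MvPolynomial (Fin N) ℝ) (c : Fin N → ℝ) (n : ℕ)
    (x : Set.Icc a b) :
    (MvPolynomial.aeval (fun k => amwF a b (c k)) P) n x =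
      MvPolynomial.eval (fun k => Real.log (n + 3) ^ (-(c k)) * amwBump a b n x) P := by
  induction P using MvPolynomial.induction_on with
  | C r => simp [Pi.algebraMap_apply]
  | add p q hp hq => simp [hp, hq]
  | mul_X p i hp => simp [hp, amwF]; ring

lemma amw_tendsto_L : Tendsto (fun n : ℕ => Real.log ((n : ℝ) + 3)) atTop atTop :=
  Real.tendsto_log_atTop.comp (tendsto_atTop_add_const_right _ _ tendsto_natCast_atTop_atTop)

lemma amw_not_summable (g : ℝ) : ¬ Summable (fun n : ℕ => Real.log ((n : ℝ) + 3) ^ (-g)) := by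
  intro h
  have h1 : (fun x : ℝ => Real.log x ^ g) =o[atTop] (fun x : ℝ => x ^ (1:ℝ)) :=
    isLittleO_log_rpow_rpow_atTop g one_pos
  have h2 := h1.comp_tendsto
    (tendsto_atTop_add_const_right atTop (3:ℝ) tendsto_natCast_atTop_atTop)
  have h3 : (fun n : ℕ => (((n + 3 : ℕ) : ℝ))⁻¹) =O[atTop]
      (fun n : ℕ => Real.log ((n : ℝ) + 3) ^ (-g)) := by
    have := h2.isBigO.inv_rev (by
      filter_upwards with n hn
      have hl := amw_log n
      exact absurd hn (Real.rpow_pos_of_pos (by simp; linarith) _).ne')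
    refine (this.congr_left ?_).congr_right ?_
    · intro n; simp
    · intro n
      have hl := amw_log n
      simp [Real.rpow_neg (by linarith : 0 ≤ Real.log ((n:ℝ)+3))]
  have h4 := summable_of_isBigO_nat h h3
  exact Real.not_summable_natCast_inv ((summable_nat_add_iff 3).1 h4)

lemma amw_poly {N : ℕ} (P : MvPolynomial (Fin N) ℝ) (hP : P ≠ 0) (c : Fin N → ℝ)
    (hc : LinearIndependent ℚ c) :
    ¬ Summable (fun n : ℕ =>
      MvPolynomial.eval (fun k => Real.log ((n : ℝ) + 3) ^ (-(c k))) P) := by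
  intro hs
  let e : (Fin N →₀ ℕ) → ℝ := fun m => ∑ i, (m i : ℝ) * c i
  have he : Function.Injective e := by
    intro m m' h
    have h1 : ∑ i, ((m i : ℚ) - (m' i : ℚ)) • c i = 0 := by
      simp only [e] at h
      simp only [Rat.smul_def, Rat.cast_sub, Rat.cast_natCast, sub_mul, Finset.sum_sub_distrib]
      linarith
    have h2 := Fintype.linearIndependent_iff.1 hc _ h1
    ext i
    have := h2 i
    exact_mod_cast sub_eq_zero.1 this
  have hev : ∀ n : ℕ, MvPolynomial.eval (fun k => Real.log ((n : ℝ) + 3) ^ (-(c k))) P =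
      ∑ m ∈ P.support, P.coeff m * Real.log ((n : ℝ) + 3) ^ (- e m) := by
    intro n
    have hl := amw_log n
    have hl0 : 0 < Real.log ((n : ℝ) + 3) := by linarith
    rw [MvPolynomial.eval_eq']
    refine Finset.sum_congr rfl fun m _ => ?_
    congr 1
    simp only [e]
    rw [← Finset.sum_neg_distrib, Real.rpow_sum_of_pos hl0]
    refine Finset.prod_congr rfl fun i _ => ?_
    rw [← Real.rpow_natCast, ← Real.rpow_mul hl0.le]
    congr 1; ring
  obtain ⟨m0, hm0, hmin⟩ := P.support.exists_min_image e
    (MvPolynomial.support_nonempty.2 hP)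
  have hlim : Tendsto (fun n : ℕ =>
      MvPolynomial.eval (fun k => Real.log ((n : ℝ) + 3) ^ (-(c k))) P *
        Real.log ((n : ℝ) + 3) ^ (e m0)) atTop (𝓝 (P.coeff m0)) := by
    have h1 : Tendsto (fun n : ℕ => ∑ m ∈ P.support,
        P.coeff m * Real.log ((n : ℝ) + 3) ^ (-(e m - e m0))) atTop
        (𝓝 (∑ m ∈ P.support, if m = m0 then P.coeff m0 else 0)) := by
      refine tendsto_finsetSum _ fun m hm => ?_
      by_cases hmm : m = m0
      · subst hmm; simp
      · rw [if_neg hmm, ← mul_zero (P.coeff m)]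
        have hlt : 0 < e m - e m0 := by
          have := lt_of_le_of_ne (hmin m hm) (fun h => hmm (he h.symm))
          linarith
        exact ((tendsto_rpow_neg_atTop hlt).comp amw_tendsto_L).const_mul _
    rw [Finset.sum_ite_eq' , if_pos hm0] at h1
    refine h1.congr fun n => ?_
    have hl := amw_log n
    rw [hev, Finset.sum_mul]
    refine Finset.sum_congr rfl fun m _ => ?_
    rw [mul_assoc, ← Real.rpow_add (by linarith)]
    congr 2; ring
  have hne : P.coeff m0 ≠ 0 := MvPolynomial.mem_support_iff.1 hm0
  apply amw_not_summable (e m0)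
  refine summable_of_isBigO_nat hs ?_
  have hpos : 0 < |P.coeff m0| / 2 := by positivity
  have hev2 := hlim.abs.eventually (lt_mem_nhds (show |P.coeff m0| / 2 < |P.coeff m0| by linarith))
  refine Asymptotics.IsBigO.of_bound (|P.coeff m0| / 2)⁻¹ ?_
  filter_upwards [hev2] with n hn
  have hl := amw_log n
  have hp : 0 < Real.log ((n : ℝ) + 3) ^ (e m0) := Real.rpow_pos_of_pos (by linarith) _
  rw [abs_mul, abs_of_pos hp] at hn
  rw [Real.rpow_neg (by linarith), Real.norm_eq_abs, Real.norm_eq_abs, abs_of_pos (inv_pos.2 hp),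
    inv_mul_eq_div, inv_eq_one_div, div_le_div_iff₀ hp hpos]
  linarith

lemma amw_main (a b : ℝ) (hab : a < b) {N : ℕ} (P : MvPolynomial (Fin N) ℝ) (hP : P ≠ 0)
    (hP0 : MvPolynomial.coeff 0 P = 0) (c : Fin N → ℝ) (hc : LinearIndependent ℚ c)
    (hpos : ∀ i, 0 < c i) :
    AntiMW a b (MvPolynomial.aeval (fun k => amwF a b (c k)) P) := by
  have hz : ∀ n x, amwBump a b n x = 0 →
      (MvPolynomial.aeval (fun k => amwF a b (c k)) P) n x = 0 := by
    intro n x h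
    rw [amw_aeval, h]
    simp only [mul_zero]
    have : MvPolynomial.eval (0 : Fin N → ℝ) P = 0 := by
      rw [MvPolynomial.eval_zero, MvPolynomial.constantCoeff_eq, hP0]
    exact this
  choose k hk using amwBump_single a b
  refine ⟨fun x => ?_, ⟨fun x => (MvPolynomial.aeval (fun k => amwF a b (c k)) P) (k x) x, ?_⟩, ?_⟩
  · refine summable_of_ne_finset_zero (s := {k x}) fun n hn => ?_
    rw [hz n x (hk x n (by simpa using hn)), abs_zero]
  · rw [Metric.tendstoUniformly_iff]
    intro ε hε
    have hcont := (MvPolynomial.continuous_eval P).continuousAt (x := (0 : Fin N → ℝ))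
    obtain ⟨δ, hδ, hd⟩ := Metric.continuousAt_iff.1 hcont ε hε
    have hsm : ∀ᶠ n : ℕ in atTop, ∀ i, Real.log ((n : ℝ) + 3) ^ (-(c i)) < δ := by
      rw [eventually_all]
      intro i
      exact ((tendsto_rpow_neg_atTop (hpos i)).comp amw_tendsto_L).eventually (gt_mem_nhds hδ)
    obtain ⟨n0, hn0⟩ := eventually_atTop.1 hsm
    filter_upwards [eventually_ge_atTop n0] with M hM x
    have hsum : ∀ n, n ≠ k x → (MvPolynomial.aeval (fun k => amwF a b (c k)) P) n x = 0 :=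
      fun n hn => hz n x (hk x n hn)
    by_cases hkM : k x < M
    · rw [Finset.sum_eq_single (k x) (fun n _ hn => hsum n hn)
        (fun h => absurd (Finset.mem_range.2 hkM) h), dist_self]
      exact hε
    · rw [Finset.sum_eq_zero (fun n hn => hsum n (by
        rintro rfl; exact hkM (Finset.mem_range.1 hn))), amw_aeval]
      have h0 : MvPolynomial.eval (0 : Fin N → ℝ) P = 0 := by
        rw [MvPolynomial.eval_zero, MvPolynomial.constantCoeff_eq, hP0]
      rw [← h0]
      apply hd
      rw [dist_pi_lt_iff hδ]
      intro i
      have h1 := hn0 (k x) (by omega) i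
      have hl := amw_log (k x)
      have h2 : 0 < Real.log (((k x : ℕ) : ℝ) + 3) ^ (-(c i)) :=
        Real.rpow_pos_of_pos (by linarith) _
      have h3 := amwBump_nonneg a b (k x) x
      have h4 := amwBump_le a b (k x) x
      rw [Pi.zero_apply, Real.dist_eq, sub_zero, abs_of_nonneg (by positivity)]
      nlinarith
  · intro hs
    apply amw_poly P hP c hc
    refine Summable.of_norm_bounded hs fun n => ?_
    obtain ⟨x, hx⟩ := amwBump_peak a b hab n
    have h1 := amw_aeval a b P c n x
    simp only [hx, mul_one] at h1
    rw [← h1]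
    exact ContinuousMap.norm_coe_le_norm _ x

lemma amwF_inj (a b : ℝ) (hab : a < b) : Function.Injective (amwF a b) := by
  intro c d h
  obtain ⟨x, hx⟩ := amwBump_peak a b hab 0
  have h1 := congrArg (fun f : C(Set.Icc a b, ℝ) => f x) (congrFun h 0)
  simp only [amwF, ContinuousMap.smul_apply, hx, smul_eq_mul, mul_one] at h1
  have hl := amw_log 0
  have := (Real.strictMono_rpow_of_base_gt_one hl).injective h1
  linarith

lemma amw_hamel : ∃ (ι : Type) (c : ι → ℝ), Cardinal.mk ι = Cardinal.continuum ∧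
    LinearIndependent ℚ c ∧ ∀ i, 0 < c i := by
  let B := Module.Basis.ofVectorSpace ℚ ℝ
  refine ⟨_, fun i => |B i|, ?_, ?_, fun i => abs_pos.2 (B.ne_zero i)⟩
  · rw [← Real.rank_rat_real]; exact B.mk_eq_rank''
  · have := B.linearIndependent.units_smul (fun i => if 0 ≤ B i then (1 : ℚˣ) else -1)
    have hh : (fun i => |B i|) =
        (fun i => if 0 ≤ B i then (1 : ℚˣ) else -1) • (B : _ → ℝ) := ?_
    · rw [hh]; exact this
    ext i
    simp only [Pi.smul_apply']
    split_ifs with h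
    · simp [abs_of_nonneg h]
    · simp [abs_of_neg (not_le.1 h), Units.smul_def]

/-- 𝒜ℳ𝒲 is strongly 𝔠-algebrable: there is a set `B` of cardinality continuum in
`C([a,b])^ℕ` (a commutative real algebra under coordinatewise operations) such that
every nonzero polynomial without constant term evaluated at distinct elements of `B`
yields a nonzero Anti M-Weierstrass sequence. -/
theorem stmt16 (a b : ℝ) (hab : a < b) :
    ∃ B : Set (ℕ → C(Set.Icc a b, ℝ)),
      Cardinal.mk B = Cardinal.continuum ∧
      ∀ (N : ℕ) (P : MvPolynomial (Fin N) ℝ), P ≠ 0 →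
        MvPolynomial.coeff 0 P = 0 →
        ∀ v : Fin N → B, Function.Injective v →
          MvPolynomial.aeval (fun k => (v k : ℕ → C(Set.Icc a b, ℝ))) P ≠ 0 ∧
          AntiMW a b (MvPolynomial.aeval (fun k => (v k : ℕ → C(Set.Icc a b, ℝ))) P) := by
  obtain ⟨ι, c, hcard, hli, hpos⟩ := amw_hamel
  have hinj : Function.Injective (fun i => amwF a b (c i)) :=
    (amwF_inj a b hab).comp hli.injective
  refine ⟨Set.range (fun i => amwF a b (c i)), ?_, ?_⟩
  · rw [Cardinal.mk_range_eq _ hinj, hcard]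
  · intro N P hP hP0 v hv
    choose j hj using fun k => (v k).2
    have hjinj : Function.Injective j := by
      intro k l h
      apply hv
      apply Subtype.ext
      rw [← hj k, ← hj l, h]
    have hvj : (fun k => (v k : ℕ → C(Set.Icc a b, ℝ))) = fun k => amwF a b (c (j k)) :=
      funext fun k => (hj k).symm
    rw [hvj]
    have hA := amw_main a b hab P hP hP0 (fun k => c (j k)) (hli.comp j hjinj) (fun i => hpos _)
    refine ⟨fun h0 => ?_, hA⟩
    apply hA.2.2
    rw [h0]
    simpa using summable_zero
end

section
/- Let N ∈ ℕ, let c₁, …, c_N be pairwise distinct real numbers in (0,1), and let λ₁, …, λ_N be real numbers, not all zero. Then the real sequence (aₙ)_{n≥1} given by aₙ = ∑_{j=1}^{N} λⱼ n^{-cⱼ} satisfies aₙ → 0 and ∑_{n=1}^∞ |aₙ| = +∞; in particular the sequences (n^{-c})_{n≥1}, c ∈ (0,1), span a linear subspace M of the sequence space of dimension 𝔠 with M \ {0} ⊂ c₀ \ ℓ₁. -/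
open Filter Topology

/-- The set of sequences `(n^{-c})_{n≥1}` for `c ∈ (0,1)` (the index `n` runs through
`1, 2, 3, …`, realized as `n+1` for `n : ℕ`). -/
def powSeqSet : Set (ℕ → ℝ) :=
  {s | ∃ γ ∈ Set.Ioo (0 : ℝ) 1, s = fun n : ℕ => ((n : ℝ) + 1) ^ (-γ)}

theorem aux_tendsto {ι : Type*} (S : Finset ι) (c : ι → ℝ) (hc : ∀ j, c j ∈ Set.Ioo (0 : ℝ) 1)
    (l : ι → ℝ) :
    Tendsto (fun n : ℕ => ∑ j ∈ S, l j * ((n : ℝ) + 1) ^ (-(c j))) atTop (nhds 0) := by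
  have h1 : Tendsto (fun n : ℕ => (n : ℝ) + 1) atTop atTop :=
    tendsto_atTop_add_const_right _ _ tendsto_natCast_atTop_atTop
  have := tendsto_finsetSum S (fun j _ =>
    ((tendsto_rpow_neg_atTop (hc j).1).comp h1).const_mul (l j))
  simpa using this

theorem aux_not_summable {ι : Type*} (S : Finset ι) (c : ι → ℝ) (hcinj : Function.Injective c)
    (hc : ∀ j, c j ∈ Set.Ioo (0 : ℝ) 1)
    (l : ι → ℝ) (hl : ∃ j ∈ S, l j ≠ 0) :
    ¬ Summable (fun n : ℕ => |∑ j ∈ S, l j * ((n : ℝ) + 1) ^ (-(c j))|) := by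
  classical
  intro hs
  have h1 : Tendsto (fun n : ℕ => (n : ℝ) + 1) atTop atTop :=
    tendsto_atTop_add_const_right _ _ tendsto_natCast_atTop_atTop
  obtain ⟨m, hm, hmin⟩ := Finset.exists_min_image (S.filter (fun j => l j ≠ 0)) c (by
    obtain ⟨j, hj, h⟩ := hl
    exact ⟨j, by simp [hj, h]⟩)
  rw [Finset.mem_filter] at hm
  have hlim : Tendsto (fun n : ℕ => ∑ j ∈ S, l j * ((n : ℝ) + 1) ^ (c m - c j)) atTop
      (nhds (∑ j ∈ S, if j = m then l m else 0)) := by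
    apply tendsto_finsetSum
    intro j hj
    by_cases hjm : j = m
    · subst hjm; simp
    · simp only [hjm, if_false]
      by_cases h0 : l j = 0
      · simp [h0]
      · have hlt : c m < c j := lt_of_le_of_ne (hmin j (by simp [hj, h0]))
          (fun h => hjm (hcinj h.symm))
        have := ((tendsto_rpow_neg_atTop (sub_pos.2 hlt)).comp h1).const_mul (l j)
        simpa using this
  rw [Finset.sum_ite_eq_of_mem' S m _ hm.1] at hlim
  have habs := hlim.abs
  have hpos : 0 < |l m| := abs_pos.2 hm.2
  have hev := habs.eventually (lt_mem_nhds (half_lt_self hpos))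
  have hsum : Summable (fun n : ℕ => |l m| / 2 * ((n : ℝ) + 1) ^ (-(c m))) := by
    refine Summable.of_norm_bounded_eventually_nat hs ?_
    filter_upwards [hev] with n hn
    have hn0 : (0 : ℝ) < (n : ℝ) + 1 := by positivity
    have hp : 0 < ((n : ℝ) + 1) ^ (-(c m)) := Real.rpow_pos_of_pos hn0 _
    rw [Real.norm_of_nonneg (by positivity)]
    have : ∑ j ∈ S, l j * ((n : ℝ) + 1) ^ (-(c j))
        = (∑ j ∈ S, l j * ((n : ℝ) + 1) ^ (c m - c j)) * ((n : ℝ) + 1) ^ (-(c m)) := by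
      rw [Finset.sum_mul]
      refine Finset.sum_congr rfl fun j _ => ?_
      rw [mul_assoc, ← Real.rpow_add hn0]
      congr 2; ring
    rw [this, abs_mul, abs_of_pos hp]
    exact mul_le_mul_of_nonneg_right hn.le hp.le
  rw [summable_mul_left_iff (by positivity)] at hsum
  have h2 : Summable (fun n : ℕ => ((n : ℝ)) ^ (-(c m))) := by
    rw [← summable_nat_add_iff 1]
    simpa using hsum
  rw [Real.summable_nat_rpow] at h2
  linarith [(hc m).2]

noncomputable def auxSeq (γ : Set.Ioo (0 : ℝ) 1) : ℕ → ℝ := fun n : ℕ => ((n : ℝ) + 1) ^ (-(γ : ℝ))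

theorem aux_range : powSeqSet = Set.range auxSeq := by
  ext s
  constructor
  · rintro ⟨γ, h, rfl⟩
    exact ⟨⟨γ, h⟩, rfl⟩
  · rintro ⟨γ, rfl⟩
    exact ⟨γ, γ.2, rfl⟩

theorem aux_lc (f : Set.Ioo (0 : ℝ) 1 →₀ ℝ) :
    Finsupp.linearCombination ℝ auxSeq f =
      fun n : ℕ => ∑ j ∈ f.support, f j * ((n : ℝ) + 1) ^ (-(j : ℝ)) := by
  ext n
  simp [Finsupp.linearCombination_apply, Finsupp.sum, auxSeq, Finset.sum_apply]

theorem aux_main (f : Set.Ioo (0 : ℝ) 1 →₀ ℝ) (hf : f ≠ 0) :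
    ¬ Summable (fun n => |Finsupp.linearCombination ℝ auxSeq f n|) := by
  rw [aux_lc]
  obtain ⟨j, hj⟩ := Finsupp.support_nonempty_iff.2 hf
  exact aux_not_summable f.support (fun j => (j : ℝ)) Subtype.val_injective (fun j => j.2) f
    ⟨j, hj, Finsupp.mem_support_iff.1 hj⟩

theorem aux_li : LinearIndependent ℝ auxSeq := by
  rw [linearIndependent_iff]
  intro f h
  by_contra hf
  apply aux_main f hf
  rw [h]
  simp

theorem stmt17 (N : ℕ) (c : Fin N → ℝ) (hcinj : Function.Injective c)
    (hc : ∀ j, c j ∈ Set.Ioo (0 : ℝ) 1) (l : Fin N → ℝ) (hl : l ≠ 0) :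
    (Tendsto (fun n : ℕ => ∑ j, l j * ((n : ℝ) + 1) ^ (-(c j))) atTop (nhds 0) ∧
      ¬ Summable fun n : ℕ => |∑ j, l j * ((n : ℝ) + 1) ^ (-(c j))|) ∧
    Module.rank ℝ (Submodule.span ℝ powSeqSet) = Cardinal.continuum ∧
    ∀ s ∈ Submodule.span ℝ powSeqSet, s ≠ 0 →
      Tendsto s atTop (nhds 0) ∧ ¬ Summable fun n => |s n| := by
  refine ⟨⟨aux_tendsto _ c hc l, aux_not_summable _ c hcinj hc l ?_⟩, ?_, ?_⟩
  · obtain ⟨j, hj⟩ := Function.ne_iff.1 hl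
    exact ⟨j, Finset.mem_univ _, hj⟩
  · rw [aux_range, rank_span aux_li, Cardinal.mk_range_eq _ aux_li.injective]
    exact Cardinal.mk_Ioo_real one_pos
  · intro s hs hs0
    rw [aux_range, Finsupp.mem_span_range_iff_exists_finsupp] at hs
    obtain ⟨f, rfl⟩ := hs
    change Finsupp.linearCombination ℝ auxSeq f ≠ 0 at hs0
    change Tendsto (Finsupp.linearCombination ℝ auxSeq f) atTop (nhds 0) ∧
      ¬ Summable fun n => |Finsupp.linearCombination ℝ auxSeq f n|
    refine ⟨?_, aux_main f (fun h => hs0 (by simp [h]))⟩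
    rw [aux_lc]
    exact aux_tendsto f.support (fun j => (j : ℝ)) (fun j => j.2) f
end

section
/- Let [a,b] be a nondegenerate compact interval with a < b, and let C ⊂ (0, +∞) be a set that is linearly independent over the field ℚ. Then the family { x ↦ e^{cx} : c ∈ C } generates a free algebra in C([a,b]): for every N ∈ ℕ, every nonzero real polynomial P in N variables with zero constant term, and all pairwise distinct c₁,…,c_N ∈ C, the function x ↦ P(e^{c₁x}, …, e^{c_N x}) is not identically zero on [a,b]. -/
open Filter Topology

/-- The character `x ↦ e^{r x}` of the additive group of reals. -/
noncomputable def expChar18 (r : ℝ) : Multiplicative ℝ →* ℝ where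
  toFun x := Real.exp (r * x.toAdd)
  map_one' := by simp
  map_mul' x y := by simp [mul_add, Real.exp_add]

theorem expChar18_inj : Function.Injective expChar18 := by
  intro r s h
  have := DFunLike.congr_fun h (Multiplicative.ofAdd (1 : ℝ))
  simpa [expChar18] using this

/-- If `C ⊆ (0,∞)` is linearly independent over `ℚ`, then the exponentials
`x ↦ e^{cx}`, `c ∈ C`, generate a free algebra in `C([a,b])`: no nonzero real
polynomial without constant term in finitely many distinct of these functions
vanishes identically on `[a,b]`. -/
theorem stmt18 (a b : ℝ) (hab : a < b) (C : Set ℝ)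
    (hCpos : C ⊆ Set.Ioi (0 : ℝ))
    (hCind : LinearIndependent ℚ ((↑) : C → ℝ)) :
    ∀ (N : ℕ) (P : MvPolynomial (Fin N) ℝ), P ≠ 0 →
      MvPolynomial.coeff 0 P = 0 →
      ∀ v : Fin N → C, Function.Injective v →
        ¬ ∀ x ∈ Set.Icc a b,
            MvPolynomial.eval (fun k => Real.exp ((v k : ℝ) * x)) P = 0 := by
  intro N P hP _ v hv hzero
  let L : (Fin N →₀ ℕ) → ℝ := fun m => ∑ i, (m i : ℝ) * (v i : ℝ)
  have hL : Function.Injective L := by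
    intro m n hmn
    have hi := Fintype.linearIndependent_iff.1 (hCind.comp v hv)
      (fun i => (m i : ℚ) - (n i : ℚ)) (by
        have : ∑ i, ((m i : ℝ) * (v i : ℝ) - (n i : ℝ) * (v i : ℝ)) = 0 := by
          rw [Finset.sum_sub_distrib]; exact sub_eq_zero.2 hmn
        rw [← this]
        refine Finset.sum_congr rfl fun i _ => ?_
        simp [Rat.smul_def, sub_mul])
    ext i
    have := sub_eq_zero.1 (hi i)
    exact_mod_cast this
  have heval : ∀ x : ℝ, MvPolynomial.eval (fun k => Real.exp ((v k : ℝ) * x)) P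
      = ∑ m ∈ P.support, P.coeff m * Real.exp (L m * x) := by
    intro x
    rw [MvPolynomial.eval_eq']
    refine Finset.sum_congr rfl fun m _ => ?_
    congr 1
    simp only [L, Finset.sum_mul, Real.exp_sum, ← Real.exp_nat_mul, mul_assoc]
  have han : AnalyticOnNhd ℝ
      (fun x : ℝ => ∑ m ∈ P.support, P.coeff m * Real.exp (L m * x)) Set.univ := by
    intro x _
    fun_prop
  have hall := han.eqOn_zero_of_preconnected_of_eventuallyEq_zero isPreconnected_univ
    (Set.mem_univ ((a + b) / 2)) (by
      filter_upwards [Icc_mem_nhds (show a < (a + b) / 2 by linarith)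
        (show (a + b) / 2 < b by linarith)] with x hx
      rw [← heval]; exact hzero x hx)
  have hli := (linearIndependent_monoidHom (Multiplicative ℝ) ℝ).comp
    (fun m => expChar18 (L m)) (expChar18_inj.comp hL)
  have := linearIndependent_iff'.1 hli P.support (fun m => P.coeff m) (by
    funext x
    have := hall (Set.mem_univ x.toAdd)
    simpa [expChar18, Finset.sum_apply] using this)
  apply hP
  ext m
  by_cases hm : m ∈ P.support
  · simpa using this m hm
  · simpa using hm
end

section
/- For each n ≥ 1 define fₙ : [0,1] → ℝ by fₙ(x) = (1/n)·sin²(2^{n+1}πx) if x ∈ (2^{-(n+1)}, 2^{-n}) and fₙ(x) = 0 otherwise. Then each fₙ is continuous on [0,1], sup_{x∈[0,1]} |fₙ(x)| = 1/n (so ∑ₙ ‖fₙ‖∞ = +∞), yet the series ∑ₙ fₙ(x) converges absolutely at every x ∈ [0,1] and its partial sums converge uniformly on [0,1]; that is, (fₙ)ₙ is an Anti M-Weierstrass sequence on [0,1]. -/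
open Filter Topology

/-- The basic example: `fₙ(x) = (1/n)·sin²(2^{n+1}πx)` on `(2^{-(n+1)}, 2^{-n})` and `0`
elsewhere, `n ≥ 1`, is an Anti M-Weierstrass sequence on `[0,1]`: each `fₙ` is continuous,
`sup_{[0,1]}|fₙ| = 1/n` (so the series of sup norms diverges), yet `∑ₙ fₙ(x)` converges
absolutely at each point and its partial sums converge uniformly on `[0,1]`. -/
theorem stmt19 (f : ℕ → ℝ → ℝ)
    (hf : ∀ n : ℕ, 1 ≤ n → ∀ x : ℝ,
      f n x =
        if x ∈ Set.Ioo ((2 : ℝ) ^ (-((n : ℤ) + 1))) ((2 : ℝ) ^ (-(n : ℤ))) then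
          (1 / (n : ℝ)) * Real.sin ((2 : ℝ) ^ (n + 1) * Real.pi * x) ^ 2
        else 0) :
    (∀ n : ℕ, 1 ≤ n → ContinuousOn (f n) (Set.Icc 0 1)) ∧
    (∀ n : ℕ, 1 ≤ n →
      sSup ((fun x => |f n x|) '' Set.Icc (0 : ℝ) 1) = 1 / (n : ℝ)) ∧
    (¬ Summable fun n : ℕ =>
      sSup ((fun x => |f (n + 1) x|) '' Set.Icc (0 : ℝ) 1)) ∧
    (∀ x ∈ Set.Icc (0 : ℝ) 1, Summable fun n : ℕ => |f (n + 1) x|) ∧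
    (∃ S : ℝ → ℝ,
      TendstoUniformlyOn (fun N x => ∑ k ∈ Finset.range N, f (k + 1) x) S atTop
        (Set.Icc 0 1)) := by
  have hmem : ∀ (n : ℕ) (x : ℝ), x ∈ Set.Ioo ((2 : ℝ) ^ (-((n : ℤ) + 1))) ((2 : ℝ) ^ (-(n : ℤ))) ↔
      1 < (2 : ℝ) ^ (n + 1) * x ∧ (2 : ℝ) ^ (n + 1) * x < 2 := by
    intro n x
    have h1 : (2 : ℝ) ^ (-((n : ℤ) + 1)) = 1 / 2 ^ (n + 1) := by
      rw [zpow_neg, one_div]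
      norm_cast
    have h2 : (2 : ℝ) ^ (-(n : ℤ)) = 2 / 2 ^ (n + 1) := by
      rw [zpow_neg, zpow_natCast, pow_succ]
      field_simp
    have hp : (0 : ℝ) < 2 ^ (n + 1) := by positivity
    rw [Set.mem_Ioo, h1, h2, div_lt_iff₀ hp, lt_div_iff₀ hp, mul_comm x]
  have hf1 : ∀ n : ℕ, 1 ≤ n → ∀ x : ℝ, f n x =
      (1 / (n : ℝ)) * Real.sin (Real.pi * max 1 (min 2 ((2 : ℝ) ^ (n + 1) * x))) ^ 2 := by
    intro n hn x
    rw [hf n hn x]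
    split_ifs with h
    · rw [hmem] at h
      rw [min_eq_right h.2.le, max_eq_right h.1.le]
      congr 3
      ring
    · rw [hmem] at h
      by_cases h1 : 1 < (2 : ℝ) ^ (n + 1) * x
      · have h2 : 2 ≤ (2 : ℝ) ^ (n + 1) * x := by
          by_contra h3
          exact h ⟨h1, not_le.mp h3⟩
        rw [min_eq_left h2, max_eq_right (by norm_num), mul_comm Real.pi 2, Real.sin_two_pi]
        simp
      · rw [max_eq_left ((min_le_right _ _).trans (not_lt.mp h1))]
        simp
  have hnn : ∀ n : ℕ, 1 ≤ n → ∀ x : ℝ, 0 ≤ f n x := by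
    intro n hn x
    rw [hf1 n hn x]
    positivity
  have hle : ∀ n : ℕ, 1 ≤ n → ∀ x : ℝ, f n x ≤ 1 / (n : ℝ) := by
    intro n hn x
    rw [hf1 n hn x]
    exact mul_le_of_le_one_right (by positivity) (Real.sin_sq_le_one _)
  have hsup : ∀ n : ℕ, 1 ≤ n →
      sSup ((fun x => |f n x|) '' Set.Icc (0 : ℝ) 1) = 1 / (n : ℝ) := by
    intro n hn
    apply IsGreatest.csSup_eq
    constructor
    · refine ⟨(3 / 2) / 2 ^ (n + 1), ⟨by positivity, ?_⟩, ?_⟩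
      · rw [div_le_one (by positivity)]
        have : (2 : ℝ) ^ 1 ≤ 2 ^ (n + 1) := pow_le_pow_right₀ (by norm_num) (by omega)
        linarith
      · have e : (2 : ℝ) ^ (n + 1) * ((3 / 2) / 2 ^ (n + 1)) = 3 / 2 := by field_simp
        have e2 : Real.sin (Real.pi * (3 / 2)) = -1 := by
          rw [show Real.pi * (3 / 2) = Real.pi / 2 + Real.pi by ring, Real.sin_add_pi,
            Real.sin_pi_div_two]
        show |f n _| = _
        rw [abs_of_nonneg (hnn n hn _), hf1 n hn, e, min_eq_right (by norm_num),
          max_eq_right (by norm_num), e2]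
        norm_num
    · rintro _ ⟨x, _, rfl⟩
      show |f n x| ≤ _
      rw [abs_of_nonneg (hnn n hn _)]
      exact hle n hn x
  have huniq : ∀ (x : ℝ) (m n : ℕ), m < n → f (m + 1) x ≠ 0 → f (n + 1) x = 0 := by
    intro x m n hmn hm
    by_contra hn
    rw [hf _ (by omega)] at hm hn
    have hm' := (hmem _ _).1 (not_not.mp fun h => hm (if_neg h))
    have hn' := (hmem _ _).1 (not_not.mp fun h => hn (if_neg h))
    have hx : 0 < x := by
      by_contra h
      have : (2 : ℝ) ^ (m + 1 + 1) * x ≤ 0 :=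
        mul_nonpos_of_nonneg_of_nonpos (by positivity) (not_lt.mp h)
      linarith [hm'.1]
    have h2 : (2 : ℝ) ^ (m + 1 + 1 + 1) ≤ 2 ^ (n + 1 + 1) :=
      pow_le_pow_right₀ (by norm_num) (by omega)
    have h3 := mul_le_mul_of_nonneg_right h2 hx.le
    rw [pow_succ] at h3
    linarith [hm'.1, hn'.2]
  have hsing : ∀ x : ℝ, ∃ k₀ : ℕ, ∀ k, k ≠ k₀ → f (k + 1) x = 0 := by
    intro x
    by_cases h : ∃ k, f (k + 1) x ≠ 0
    · obtain ⟨k₀, h0⟩ := h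
      refine ⟨k₀, fun k hk => ?_⟩
      rcases lt_or_gt_of_ne hk with h | h
      · by_contra hc
        exact h0 (huniq x k k₀ h hc)
      · exact huniq x k₀ k h h0
    · push Not at h
      exact ⟨0, fun k _ => h k⟩
  refine ⟨?_, hsup, ?_, ?_, ?_⟩
  · intro n hn
    have : f n = _ := funext (hf1 n hn)
    rw [this]
    fun_prop
  · intro h
    have e : (fun n : ℕ => sSup ((fun x => |f (n + 1) x|) '' Set.Icc (0 : ℝ) 1)) =
        fun n : ℕ => 1 / ((n + 1 : ℕ) : ℝ) := funext fun n => hsup (n + 1) (by omega)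
    rw [e] at h
    exact Real.not_summable_one_div_natCast ((summable_nat_add_iff 1).1 h)
  · intro x _
    obtain ⟨k₀, hk⟩ := hsing x
    apply summable_of_ne_finset_zero (s := {k₀})
    intro k hk'
    rw [hk k (by simpa using hk'), abs_zero]
  · refine ⟨fun x => ∑' k, f (k + 1) x, ?_⟩
    rw [Metric.tendstoUniformlyOn_iff]
    intro ε hε
    have ht := (tendsto_one_div_add_atTop_nhds_zero_nat (𝕜 := ℝ)).eventually (gt_mem_nhds hε)
    filter_upwards [ht] with N hN x _
    obtain ⟨k₀, hk⟩ := hsing x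
    rw [tsum_eq_single k₀ hk]
    by_cases hc : k₀ < N
    · rw [Finset.sum_eq_single_of_mem k₀ (Finset.mem_range.2 hc) (fun k _ h => hk k h), dist_self]
      exact hε
    · rw [Finset.sum_eq_zero, Real.dist_eq, sub_zero, abs_of_nonneg (hnn _ (by omega) _)]
      · refine lt_of_le_of_lt (hle _ (by omega) x) (lt_of_le_of_lt ?_ hN)
        push_cast
        have : (N : ℝ) ≤ k₀ := by exact_mod_cast not_lt.mp hc
        gcongr
      · intro k h
        apply hk
        have := Finset.mem_range.1 h
        omega
end
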